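/- arXiv:2111.10328 — 13 statements merged into one kernel-verified Lean document; each statement's English description precedes it below -/
import Mathlib

section
/- For any four points z₁, z₂, z₃, z₄ in the hyperbolic plane, writing d_ij for the hyperbolic distance between z_i and z_j, one has sinh(d₁₃/2)·sinh(d₂₄/2) ≤ sinh(d₁₂/2)·sinh(d₃₄/2) + sinh(d₂₃/2)·sinh(d₁₄/2). (This is the κ = −1 case of the κ-Ptolemy inequality in the model space of constant curvature κ.) -/
/-!
In the upper half-plane, `2 sinh (d(z, w) / 2) = |z - w| / √(Im z · Im w)`. Ptolemy's inequality is
homogeneous of degree one in each of the four points, so it survives multiplying the distance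
`|z - w|` by a factor of the form `φ(z) φ(w)` with `φ ≥ 0`: the hyperbolic inequality is the
Euclidean one in disguise.
-/

/-- A kernel `δ` is *Ptolemaic* if it satisfies Ptolemy's inequality on all quadruples of points.
It need not be a metric, nor symmetric, so that `sinh (dist z w / 2)` and rescaled distances are
covered. -/
def IsPtolemaic {X R : Type*} [Mul R] [Add R] [LE R] (δ : X → X → R) : Prop :=
  ∀ a b c d, δ a c * δ b d ≤ δ a b * δ c d + δ b c * δ a d

namespace IsPtolemaic

variable {X R : Type*}

protected theorem comp {Y : Type*} [Mul R] [Add R] [LE R] {δ : X → X → R} (hδ : IsPtolemaic δ)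
    (f : Y → X) : IsPtolemaic fun x y ↦ δ (f x) (f y) :=
  fun a b c d ↦ hδ (f a) (f b) (f c) (f d)

protected theorem rescale [CommSemiring R] [PartialOrder R] [IsOrderedRing R] {δ : X → X → R}
    (hδ : IsPtolemaic δ) {φ : X → R} (hφ : ∀ x, 0 ≤ φ x) :
    IsPtolemaic fun x y ↦ φ x * φ y * δ x y := by
  intro a b c d
  have hweight : 0 ≤ φ a * φ b * φ c * φ d :=
    mul_nonneg (mul_nonneg (mul_nonneg (hφ a) (hφ b)) (hφ c)) (hφ d)
  calc
    φ a * φ c * δ a c * (φ b * φ d * δ b d)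
      = φ a * φ b * φ c * φ d * (δ a c * δ b d) := by ring
    _ ≤ φ a * φ b * φ c * φ d * (δ a b * δ c d + δ b c * δ a d) :=
      mul_le_mul_of_nonneg_left (hδ a b c d) hweight
    _ = φ a * φ b * δ a b * (φ c * φ d * δ c d) + φ b * φ c * δ b c * (φ a * φ d * δ a d) := by
      ring

end IsPtolemaic

theorem isPtolemaic_dist {V P : Type*} [NormedAddCommGroup V] [InnerProductSpace ℝ V]
    [MetricSpace P] [NormedAddTorsor V P] : IsPtolemaic (dist : P → P → ℝ) :=
  EuclideanGeometry.mul_dist_le_mul_dist_add_mul_dist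

theorem sinh_half_dist_eq_inv_sqrt_mul_dist_coe (z w : UpperHalfPlane) :
    Real.sinh (dist z w / 2) = (√(2 * z.im))⁻¹ * (√(2 * w.im))⁻¹ * dist (z : ℂ) w := by
  have hsqrt : √(2 * z.im) * √(2 * w.im) = 2 * √(z.im * w.im) := by
    rw [← Real.sqrt_mul (by positivity), mul_mul_mul_comm, Real.sqrt_mul (by norm_num),
      Real.sqrt_mul_self zero_le_two]
  rw [UpperHalfPlane.sinh_half_dist, ← hsqrt, ← mul_inv, div_eq_inv_mul]

theorem isPtolemaic_sinh_half_dist :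
    IsPtolemaic fun z w : UpperHalfPlane ↦ Real.sinh (dist z w / 2) := by
  simp only [sinh_half_dist_eq_inv_sqrt_mul_dist_coe]
  exact (isPtolemaic_dist.comp UpperHalfPlane.coe).rescale
    fun z ↦ inv_nonneg.2 (Real.sqrt_nonneg (2 * z.im))

/-- Hyperbolic Ptolemy inequality (κ = −1 case of the κ-Ptolemy inequality) in the
upper half-plane model of the hyperbolic plane. -/
theorem hyperbolic_ptolemy (z₁ z₂ z₃ z₄ : UpperHalfPlane) :
    Real.sinh (dist z₁ z₃ / 2) * Real.sinh (dist z₂ z₄ / 2) ≤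
      Real.sinh (dist z₁ z₂ / 2) * Real.sinh (dist z₃ z₄ / 2) +
        Real.sinh (dist z₂ z₃ / 2) * Real.sinh (dist z₁ z₄ / 2) :=
  isPtolemaic_sinh_half_dist z₁ z₂ z₃ z₄
end

section
/- Let p₁, p₂, p₃, p₄ be unit vectors in a real inner product space, and set d_ij = arccos⟪p_i, p_j⟫ (the spherical geodesic distance between p_i and p_j on the unit sphere). Then sin(d₁₃/2)·sin(d₂₄/2) ≤ sin(d₁₂/2)·sin(d₃₄/2) + sin(d₂₃/2)·sin(d₁₄/2). (This is the κ = 1 case of the κ-Ptolemy inequality; note it holds with no restriction on the perimeter d₁₂ + d₂₃ + d₃₄ + d₄₁.) -/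
open RealInnerProductSpace

section Chord

open InnerProductGeometry

variable {E : Type*} [NormedAddCommGroup E] [InnerProductSpace ℝ E] {x y : E}

lemma sin_half_angle_nonneg (x y : E) : 0 ≤ Real.sin (angle x y / 2) :=
  Real.sin_nonneg_of_nonneg_of_le_pi (by linarith [angle_nonneg x y])
    (by linarith [angle_le_pi x y, Real.pi_pos])

lemma dist_eq_two_mul_norm_mul_sin_half_angle (h : ‖x‖ = ‖y‖) :
    dist x y = 2 * ‖x‖ * Real.sin (angle x y / 2) := by
  have sin_sq_half_angle : Real.sin (angle x y / 2) ^ 2 = 1 / 2 - Real.cos (angle x y) / 2 := by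
    rw [Real.sin_sq_eq_half_sub, mul_div_cancel₀ _ two_ne_zero]
  refine (sq_eq_sq₀ dist_nonneg
    (mul_nonneg (by positivity) (sin_half_angle_nonneg x y))).mp ?_
  calc dist x y ^ 2
      = ‖x‖ ^ 2 + ‖y‖ ^ 2 - 2 * ‖x‖ * ‖y‖ * Real.cos (angle x y) := by
        rw [dist_eq_norm, norm_sub_sq_real, ← cos_angle_mul_norm_mul_norm]
        ring
    _ = (2 * ‖x‖) ^ 2 * (1 / 2 - Real.cos (angle x y) / 2) := by
        rw [← h]
        ring
    _ = (2 * ‖x‖ * Real.sin (angle x y / 2)) ^ 2 := by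
        rw [← sin_sq_half_angle, ← mul_pow]

lemma sin_half_arccos_inner_eq_half_dist (hx : ‖x‖ = 1) (hy : ‖y‖ = 1) :
    Real.sin (Real.arccos ⟪x, y⟫ / 2) = dist x y / 2 := by
  have angle_eq : angle x y = Real.arccos ⟪x, y⟫ := by
    rw [angle, hx, hy, mul_one, div_one]
  rw [dist_eq_two_mul_norm_mul_sin_half_angle (hx.trans hy.symm), hx, angle_eq, mul_one,
    mul_div_cancel_left₀ _ two_ne_zero]

end Chord

/-- Spherical Ptolemy inequality (κ = 1 case of the κ-Ptolemy inequality) for unit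
vectors in a real inner product space, with the spherical geodesic distance
`d i j = arccos ⟪p i, p j⟫`. -/
theorem spherical_ptolemy {E : Type*} [NormedAddCommGroup E] [InnerProductSpace ℝ E]
    (p₁ p₂ p₃ p₄ : E) (h₁ : ‖p₁‖ = 1) (h₂ : ‖p₂‖ = 1) (h₃ : ‖p₃‖ = 1) (h₄ : ‖p₄‖ = 1) :
    Real.sin (Real.arccos ⟪p₁, p₃⟫ / 2) * Real.sin (Real.arccos ⟪p₂, p₄⟫ / 2) ≤
      Real.sin (Real.arccos ⟪p₁, p₂⟫ / 2) * Real.sin (Real.arccos ⟪p₃, p₄⟫ / 2) +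
        Real.sin (Real.arccos ⟪p₂, p₃⟫ / 2) * Real.sin (Real.arccos ⟪p₁, p₄⟫ / 2) := by
  have euclidean_ptolemy := EuclideanGeometry.mul_dist_le_mul_dist_add_mul_dist p₁ p₂ p₃ p₄
  rw [sin_half_arccos_inner_eq_half_dist h₁ h₃, sin_half_arccos_inner_eq_half_dist h₂ h₄,
    sin_half_arccos_inner_eq_half_dist h₁ h₂, sin_half_arccos_inner_eq_half_dist h₃ h₄,
    sin_half_arccos_inner_eq_half_dist h₂ h₃, sin_half_arccos_inner_eq_half_dist h₁ h₄]
  linarith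
end

section
/- For any real number r with 0 < r ≤ 1 and any four points z₁, z₂, z₃, z₄ in the hyperbolic plane, writing d_ij for the hyperbolic distance between z_i and z_j, one has sinh(r·d₁₃/2)·sinh(r·d₂₄/2) ≤ sinh(r·d₁₂/2)·sinh(r·d₃₄/2) + sinh(r·d₂₃/2)·sinh(r·d₁₄/2). (This is the κ-Ptolemy inequality for κ = −r², valid because the hyperbolic plane is CAT(κ) for every κ ≥ −1.) -/
/-! With respect to `log r`, the logarithms of `sinh (r * x)` and `cosh (r * x)` have as derivatives
the elasticities `x coth x` and `x tanh x` (taken at `r * x`), so a ratio of products of such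
factors is antitone in `r` as soon as the elasticities in the numerator add up to no more than those
in the denominator. As `coth x + tanh x = 2 coth (2 * x)`, the inequalities needed between
elasticities come down to `tanh` being monotone and `x coth x` being convex with value `1` at `0`.

In this way Ptolemy's inequality passes, in any metric space, from a scale `s` to every smaller
scale `r`. When a diagonal is the longest of the six distances, the right-hand side divided by the
left-hand side is antitone. When a side is the longest, the inequality is first compared with the
identity `sinh (p + e) * sinh (q + e) = sinh (p + q + e) * sinh e + sinh p * sinh q` of four points
on a line, and the two differences from it are what is divided. In the hyperbolic plane,
`sinh (dist z w / 2) = |z - w| / (2 * √(z.im * w.im))`, so the inequality at scale `1 / 2` is the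
Euclidean Ptolemy inequality.
-/

open Real Set

section

variable {𝕜 β : Type*} [Field 𝕜] [LinearOrder 𝕜] [IsStrictOrderedRing 𝕜] [AddCommMonoid β]
  [PartialOrder β] [IsOrderedAddMonoid β] [Module 𝕜 β] {s : Set 𝕜} {f : 𝕜 → β} {a b x y : 𝕜}

theorem add_le_add_of_convexOn (hf : ConvexOn 𝕜 s f) (ha : a ∈ s) (hb : b ∈ s) (hx : x ∈ Icc a b)
    (hxy : x + y = a + b) : f x + f y ≤ f a + f b := by
  obtain ⟨p, q, hp, hq, hpq, rfl⟩ := (segment_eq_Icc (hx.1.trans hx.2)).symm ▸ hx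
  obtain rfl : y = q • a + p • b := by
    simp only [smul_eq_mul] at hxy ⊢
    linear_combination hxy - (a + b) * hpq
  calc f (p • a + q • b) + f (q • a + p • b) ≤ p • f a + q • f b + (q • f a + p • f b) :=
        add_le_add (hf.2 ha hb hp hq hpq) (hf.2 ha hb hq hp (by rwa [add_comm]))
    _ = f a + f b := by
        rw [add_add_add_comm, ← add_smul, ← add_smul, add_comm q p, hpq, one_smul, one_smul]

theorem add_le_add_of_convexOn_of_monotoneOn (hf : ConvexOn 𝕜 s f) (hmono : MonotoneOn f s)
    (ha : a ∈ s) (hb : b ∈ s) (hx : x ∈ s) (hy : y ∈ s) (hxb : x ≤ b) (hyb : y ≤ b)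
    (hxy : x + y ≤ a + b) : f x + f y ≤ f a + f b := by
  rcases le_total x a with hxa | hax
  · exact add_le_add (hmono hx ha hxa) (hmono hy hb hyb)
  have hy' : a + b - x ∈ s :=
    hf.1.ordConnected.out ha hb ⟨by linarith, by linarith⟩
  calc f x + f y ≤ f x + f (a + b - x) := by
        gcongr
        exact hmono hy hy' (by linarith)
    _ ≤ f a + f b := add_le_add_of_convexOn hf ha hb ⟨hax, hxb⟩ (by ring)

end

theorem antitoneOn_div_of_hasDerivAt {D : Set ℝ} (hD : Convex ℝ D) {f g f' g' : ℝ → ℝ}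
    (hf : ∀ x ∈ D, HasDerivAt f (f' x) x) (hg : ∀ x ∈ D, HasDerivAt g (g' x) x)
    (hg₀ : ∀ x ∈ D, g x ≠ 0) (h : ∀ x ∈ D, f' x * g x ≤ f x * g' x) :
    AntitoneOn (fun x ↦ f x / g x) D := by
  have hdiv : ∀ x ∈ D, HasDerivAt (fun x ↦ f x / g x) ((f' x * g x - f x * g' x) / g x ^ 2) x :=
    fun x hx ↦ (hf x hx).fun_div (hg x hx) (hg₀ x hx)
  refine antitoneOn_of_hasDerivWithinAt_nonpos hD
    (fun x hx ↦ (hdiv x hx).continuousAt.continuousWithinAt)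
    (fun x hx ↦ (hdiv x (interior_subset hx)).hasDerivWithinAt) fun x hx ↦ ?_
  exact div_nonpos_of_nonpos_of_nonneg (sub_nonpos.2 (h x (interior_subset hx))) (sq_nonneg _)

theorem le_of_antitoneOn_div {α 𝕜 : Type*} [Preorder α] [Field 𝕜] [LinearOrder 𝕜]
    [IsStrictOrderedRing 𝕜] {s : Set α} {f g : α → 𝕜} (h : AntitoneOn (fun x ↦ f x / g x) s)
    {x y : α} (hx : x ∈ s) (hy : y ∈ s) (hxy : x ≤ y) (hgx : 0 < g x) (hgy : 0 < g y)
    (hle : g y ≤ f y) : g x ≤ f x :=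
  (one_le_div hgx).1 (((one_le_div hgy).2 hle).trans (h hx hy hxy))

theorem sinh_le_self_mul_cosh {x : ℝ} (hx : 0 ≤ x) : sinh x ≤ x * cosh x := by
  have hderiv (y : ℝ) : HasDerivAt (fun y ↦ y * cosh y - sinh y) (y * sinh y) y :=
    (((hasDerivAt_id y).fun_mul (hasDerivAt_cosh y)).fun_sub (hasDerivAt_sinh y)).congr_deriv
      (by simp)
  have hmono : MonotoneOn (fun y ↦ y * cosh y - sinh y) (Ici 0) := by
    refine monotoneOn_of_hasDerivWithinAt_nonneg (convex_Ici 0) (by fun_prop)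
      (fun y _ ↦ (hderiv y).hasDerivWithinAt) fun y hy ↦ ?_
    have hy : 0 < y := by simpa using hy
    positivity
  simpa using hmono self_mem_Ici hx hx

theorem monotone_tanh : Monotone tanh := by
  intro x y hxy
  rw [tanh_eq_sinh_div_cosh, tanh_eq_sinh_div_cosh, div_le_div_iff₀ (cosh_pos x) (cosh_pos y),
    mul_comm (sinh y), ← sub_nonneg, mul_comm (sinh x)]
  have : 0 ≤ sinh (y - x) := sinh_nonneg_iff.2 (sub_nonneg.2 hxy)
  rw [sinh_sub] at this
  linarith

/-- The elasticity `x tanh x` of `cosh`: the derivative of `log (cosh (r * x))` with respect to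
`log r`, at `r = 1`. -/
noncomputable def coshElasticity (x : ℝ) : ℝ := x * tanh x

/-- The elasticity `x coth x` of `sinh`: the derivative of `log (sinh (r * x))` with respect to
`log r`, at `r = 1`. Dividing by `dslope sinh 0 x`, which is `sinh x / x` extended by `1`, gives it
its limiting value `1` at `0`. -/
noncomputable def sinhElasticity (x : ℝ) : ℝ := cosh x / dslope sinh 0 x

theorem sinhElasticity_zero : sinhElasticity 0 = 1 := by simp [sinhElasticity]

theorem sinhElasticity_of_ne_zero {x : ℝ} (hx : x ≠ 0) :
    sinhElasticity x = x * cosh x / sinh x := by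
  have hs : sinh x ≠ 0 := sinh_ne_zero.2 hx
  rw [sinhElasticity, dslope_of_ne _ hx, slope_def_field, sinh_zero, sub_zero, sub_zero]
  field_simp

theorem sinhElasticity_mul_sinh (x : ℝ) : sinhElasticity x * sinh x = x * cosh x := by
  rcases eq_or_ne x 0 with rfl | hx
  · simp
  · rw [sinhElasticity_of_ne_zero hx, div_mul_cancel₀ _ (sinh_ne_zero.2 hx)]

theorem coshElasticity_mul_cosh (x : ℝ) : coshElasticity x * cosh x = x * sinh x := by
  rw [coshElasticity, tanh_eq_sinh_div_cosh, mul_assoc, div_mul_cancel₀ _ (cosh_pos x).ne']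

theorem sinhElasticity_two_mul (x : ℝ) :
    sinhElasticity (2 * x) = sinhElasticity x + coshElasticity x := by
  rcases eq_or_ne x 0 with rfl | hx
  · simp [coshElasticity]
  · have hs : sinh x ≠ 0 := sinh_ne_zero.2 hx
    have hc : cosh x ≠ 0 := (cosh_pos x).ne'
    rw [sinhElasticity_of_ne_zero hx, sinhElasticity_of_ne_zero (by simpa using hx),
      coshElasticity, tanh_eq_sinh_div_cosh, sinh_two_mul, cosh_two_mul]
    field_simp

theorem continuous_sinhElasticity : Continuous sinhElasticity := by
  have hcont : Continuous (dslope sinh 0) := by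
    rw [← continuousOn_univ, continuousOn_dslope Filter.univ_mem]
    exact ⟨continuous_sinh.continuousOn, differentiableAt_sinh⟩
  refine continuous_cosh.div hcont fun x ↦ ?_
  rcases eq_or_ne x 0 with rfl | hx
  · simp
  · simp [dslope_of_ne _ hx, slope_def_field, hx]

theorem hasDerivAt_sinhElasticity {x : ℝ} (hx : x ≠ 0) :
    HasDerivAt sinhElasticity ((sinh x * cosh x - x) / sinh x ^ 2) x := by
  have hquot := ((hasDerivAt_id x).fun_mul (hasDerivAt_cosh x)).fun_div (hasDerivAt_sinh x)
    (sinh_ne_zero.2 hx)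
  refine (hquot.congr_of_eventuallyEq ?_).congr_deriv ?_
  · filter_upwards [isOpen_ne.mem_nhds hx] with y hy using sinhElasticity_of_ne_zero hy
  · simp only [id]
    congr 1
    linear_combination -x * cosh_sq x

theorem hasDerivAt_deriv_sinhElasticity {x : ℝ} (hx : x ≠ 0) :
    HasDerivAt (fun x ↦ (sinh x * cosh x - x) / sinh x ^ 2)
      (2 * (x * cosh x - sinh x) / sinh x ^ 3) x := by
  have hs : sinh x ≠ 0 := sinh_ne_zero.2 hx
  refine ((((hasDerivAt_sinh x).fun_mul (hasDerivAt_cosh x)).fun_sub (hasDerivAt_id x)).fun_div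
    ((hasDerivAt_sinh x).fun_pow 2) (pow_ne_zero 2 hs)).congr_deriv ?_
  simp only [id]
  field_simp
  linear_combination -(sinh x) ^ 2 * cosh_sq x

theorem convexOn_sinhElasticity : ConvexOn ℝ (Ici 0) sinhElasticity := by
  have hne : ∀ x ∈ interior (Ici (0 : ℝ)), x ≠ 0 := fun x hx ↦ by
    rw [interior_Ici] at hx
    exact hx.ne'
  refine convexOn_of_hasDerivWithinAt2_nonneg (convex_Ici 0) continuous_sinhElasticity.continuousOn
    (fun x hx ↦ (hasDerivAt_sinhElasticity (hne x hx)).hasDerivWithinAt)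
    (fun x hx ↦ (hasDerivAt_deriv_sinhElasticity (hne x hx)).hasDerivWithinAt) fun x hx ↦ ?_
  have hx₀ : 0 ≤ x := interior_subset hx
  have := sub_nonneg.2 (sinh_le_self_mul_cosh hx₀)
  positivity

theorem one_le_sinhElasticity {x : ℝ} (hx : 0 ≤ x) : 1 ≤ sinhElasticity x := by
  rcases hx.eq_or_lt with rfl | hx'
  · exact sinhElasticity_zero.ge
  · rw [sinhElasticity_of_ne_zero hx'.ne', one_le_div (sinh_pos_iff.2 hx')]
    exact sinh_le_self_mul_cosh hx

theorem sinhElasticity_add_le {x y : ℝ} (hx : 0 ≤ x) (hy : 0 ≤ y) :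
    sinhElasticity x + sinhElasticity y ≤ 1 + sinhElasticity (x + y) := by
  rw [← sinhElasticity_zero]
  exact add_le_add_of_convexOn convexOn_sinhElasticity self_mem_Ici (add_nonneg hx hy)
    ⟨hx, le_add_of_nonneg_right hy⟩ (zero_add _).symm

theorem monotoneOn_sinhElasticity : MonotoneOn sinhElasticity (Ici 0) := by
  intro x hx y _ hxy
  have hadd := sinhElasticity_add_le hx (sub_nonneg.2 hxy)
  rw [add_sub_cancel] at hadd
  linarith [one_le_sinhElasticity (sub_nonneg.2 hxy)]

theorem sinhElasticity_add_le_coshElasticity_add {x y : ℝ} (hx : 0 ≤ x) (hxy : x ≤ y) :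
    sinhElasticity (x + y) ≤ coshElasticity y + sinhElasticity x := by
  have hconv := add_le_add_of_convexOn convexOn_sinhElasticity (a := x) (b := 2 * y) (x := x + y)
    (y := y) hx (mem_Ici.2 (by linarith)) ⟨by linarith, by linarith⟩ (by ring)
  rw [sinhElasticity_two_mul] at hconv
  linarith

theorem antitoneOn_sinhElasticity_sub_coshElasticity :
    AntitoneOn (fun x ↦ sinhElasticity x - coshElasticity x) (Ici 0) := by
  intro x hx y _ hxy
  have hx₀ : 0 ≤ x := hx
  have h₁ := add_le_add_of_convexOn convexOn_sinhElasticity (b := x + y) (x := y) (y := 2 * x) hx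
    (mem_Ici.2 (by linarith)) ⟨by linarith, by linarith⟩ (by ring)
  have h₂ := add_le_add_of_convexOn convexOn_sinhElasticity (b := 2 * y) (x := y) (y := x + y) hx
    (mem_Ici.2 (by linarith)) ⟨by linarith, by linarith⟩ (by ring)
  rw [sinhElasticity_two_mul] at h₁ h₂
  change sinhElasticity y - coshElasticity y ≤ sinhElasticity x - coshElasticity x
  linarith

theorem monotoneOn_coshElasticity : MonotoneOn coshElasticity (Ici 0) := by
  intro x hx y hy hxy
  have htanh : 0 ≤ tanh x := by simpa using monotone_tanh hx
  exact mul_le_mul hxy (monotone_tanh hxy) htanh hy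

theorem coshElasticity_add_le {x y : ℝ} (hx : 0 ≤ x) (hy : 0 ≤ y) :
    coshElasticity x + coshElasticity y ≤ coshElasticity (x + y) := by
  rw [coshElasticity, coshElasticity, coshElasticity, add_mul]
  gcongr <;> exact monotone_tanh (by linarith)

theorem coshElasticity_add_sinhElasticity_add_le {P Q R u v w e : ℝ} (hP : 0 ≤ P) (hu : 0 ≤ u)
    (hv : 0 ≤ v) (hw : 0 ≤ w) (hwQ : 2 * w ≤ Q) (huv : u + v ≤ e) (hPQ : P + Q - w ≤ R) :
    coshElasticity P + sinhElasticity Q + sinhElasticity (u + v) ≤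
      coshElasticity R + sinhElasticity w + sinhElasticity e := by
  have hQ : sinhElasticity Q ≤ coshElasticity (Q - w) + sinhElasticity w := by
    simpa using sinhElasticity_add_le_coshElasticity_add hw (by linarith : w ≤ Q - w)
  have hR : coshElasticity P + coshElasticity (Q - w) ≤ coshElasticity R :=
    (coshElasticity_add_le hP (by linarith)).trans
      (monotoneOn_coshElasticity (mem_Ici.2 (by linarith)) (mem_Ici.2 (by linarith)) (by linarith))
  have he : sinhElasticity (u + v) ≤ sinhElasticity e :=
    monotoneOn_sinhElasticity (add_nonneg hu hv) ((add_nonneg hu hv).trans huv) huv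
  linarith

theorem coshElasticity_add_sinhElasticity_le {x y R : ℝ} (hx : 0 ≤ x) (hy : 0 ≤ y) (hxR : x ≤ R)
    (hyR : y ≤ R) : coshElasticity x + sinhElasticity y ≤ coshElasticity R + sinhElasticity x := by
  rcases le_total x y with hxy | hyx
  · have hsub : sinhElasticity y - coshElasticity y ≤ sinhElasticity x - coshElasticity x :=
      antitoneOn_sinhElasticity_sub_coshElasticity hx hy hxy
    linarith [monotoneOn_coshElasticity hy (hy.trans hyR) hyR]
  · exact add_le_add (monotoneOn_coshElasticity hx (hx.trans hxR) hxR)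
      (monotoneOn_sinhElasticity hy hx hyx)

theorem coshElasticity_add_sinhElasticity_sub_le {P Q R u v w e : ℝ} (hQP : Q ≤ P) (hu : 0 ≤ u)
    (huP : u ≤ P) (hv : 0 ≤ v) (hw : 0 ≤ w) (hwQ : 2 * w ≤ Q) (huv : u + v ≤ e)
    (hPQ : P + Q - w ≤ R) :
    coshElasticity u + sinhElasticity (P - Q) + sinhElasticity v ≤
      coshElasticity R + sinhElasticity w + sinhElasticity e := by
  have hR := coshElasticity_add_sinhElasticity_le (R := R) hu (sub_nonneg.2 hQP) (by linarith)
    (by linarith)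
  have he : sinhElasticity (u + v) ≤ sinhElasticity e :=
    monotoneOn_sinhElasticity (add_nonneg hu hv) ((add_nonneg hu hv).trans huv) huv
  linarith [sinhElasticity_add_le hu hv, one_le_sinhElasticity hw]

/-- The product `cosh (r * x) * sinh (r * y) * sinh (r * z)` as a function of the scale `r`, the
common shape of all terms whose ratios are compared at two scales. -/
noncomputable def coshSinhSinh (x y z r : ℝ) : ℝ := cosh (r * x) * sinh (r * y) * sinh (r * z)

theorem coshSinhSinh_nonneg {x y z r : ℝ} (hy : 0 ≤ y) (hz : 0 ≤ z) (hr : 0 ≤ r) :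
    0 ≤ coshSinhSinh x y z r := by
  rw [coshSinhSinh]
  positivity

theorem coshSinhSinh_pos {x y z r : ℝ} (hy : 0 < y) (hz : 0 < z) (hr : 0 < r) :
    0 < coshSinhSinh x y z r := by
  rw [coshSinhSinh]
  positivity

theorem hasDerivAt_coshSinhSinh (x y z : ℝ) {r : ℝ} (hr : r ≠ 0) :
    HasDerivAt (coshSinhSinh x y z)
      ((coshElasticity (r * x) + sinhElasticity (r * y) + sinhElasticity (r * z)) / r *
        coshSinhSinh x y z r) r := by
  refine (((hasDerivAt_mul_const x).cosh.fun_mul (hasDerivAt_mul_const y).sinh).fun_mul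
    (hasDerivAt_mul_const z).sinh).congr_deriv ?_
  rw [coshSinhSinh, div_mul_eq_mul_div, eq_div_iff hr]
  linear_combination
    -(sinh (r * y) * sinh (r * z)) * coshElasticity_mul_cosh (r * x) -
    cosh (r * x) * sinh (r * z) * sinhElasticity_mul_sinh (r * y) -
    cosh (r * x) * sinh (r * y) * sinhElasticity_mul_sinh (r * z)

theorem antitoneOn_coshSinhSinh_div {x y z x' y' z' : ℝ} (hy : 0 ≤ y) (hz : 0 ≤ z) (hy' : 0 < y')
    (hz' : 0 < z')
    (h : ∀ r, 0 < r → coshElasticity (r * x) + sinhElasticity (r * y) + sinhElasticity (r * z) ≤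
      coshElasticity (r * x') + sinhElasticity (r * y') + sinhElasticity (r * z')) :
    AntitoneOn (fun r ↦ coshSinhSinh x y z r / coshSinhSinh x' y' z' r) (Ioi 0) := by
  refine antitoneOn_div_of_hasDerivAt (convex_Ioi 0)
    (fun r hr ↦ hasDerivAt_coshSinhSinh x y z (ne_of_gt hr))
    (fun r hr ↦ hasDerivAt_coshSinhSinh x' y' z' (ne_of_gt hr))
    (fun r hr ↦ (coshSinhSinh_pos hy' hz' hr).ne') fun r (hr : 0 < r) ↦ ?_
  rw [mul_assoc, mul_left_comm (coshSinhSinh x y z r)]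
  have hnum : 0 ≤ coshSinhSinh x y z r := coshSinhSinh_nonneg hy hz hr.le
  have hden : 0 < coshSinhSinh x' y' z' r := coshSinhSinh_pos hy' hz' hr
  exact mul_le_mul_of_nonneg_right ((div_le_div_iff_of_pos_right hr).2 (h r hr))
    (mul_nonneg hnum hden.le)

-- For `Q ≤ P` and `0 ≤ u, v` both terms on the right are nonnegative products of the shape
-- `coshSinhSinh`, whose elasticities can be bounded separately.
theorem sinh_mul_sinh_sub_sinh_mul_sinh (P Q u v : ℝ) :
    sinh (P + u) * sinh (Q + v) - sinh (P - u) * sinh (Q - v) =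
      2 * (cosh P * sinh Q * sinh (u + v) + cosh u * sinh (P - Q) * sinh v) := by
  simp only [sinh_add, sinh_sub]
  ring

theorem sinh_sub_sinh (R w : ℝ) : sinh (R + w) - sinh (R - w) = 2 * (cosh R * sinh w) := by
  rw [sinh_add, sinh_sub]
  ring

theorem antitoneOn_sinh_mul_sinh_sub_div {p q g h c e : ℝ} (hp : 0 ≤ p) (hq : 0 ≤ q) (hpg : p ≤ g)
    (hqh : q ≤ h) (hgh : g + h ≤ p + q + 2 * e) (he : 0 < e) (hc : c < p + q + e) (hpc : p + e ≤ c)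
    (hqc : q + e ≤ c) :
    AntitoneOn (fun r ↦ (sinh (r * g) * sinh (r * h) - sinh (r * p) * sinh (r * q)) /
      ((sinh (r * (p + q + e)) - sinh (r * c)) * sinh (r * e))) (Ioi 0) := by
  wlog hQP : h + q ≤ g + p generalizing p q g h
  · have := this hq hp hqh hpg (by linarith) (by linarith) hqc hpc (by linarith)
    simpa only [mul_comm (sinh (_ * h)), mul_comm (sinh (_ * q)), add_comm q p] using this
  obtain ⟨P, u, rfl, rfl⟩ : ∃ P u, g = P + u ∧ p = P - u :=
    ⟨(g + p) / 2, (g - p) / 2, by ring, by ring⟩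
  obtain ⟨Q, v, rfl, rfl⟩ : ∃ Q v, h = Q + v ∧ q = Q - v :=
    ⟨(h + q) / 2, (h - q) / 2, by ring, by ring⟩
  obtain ⟨R, w, hRw, rfl⟩ : ∃ R w, P - u + (Q - v) + e = R + w ∧ c = R - w :=
    ⟨(P - u + (Q - v) + e + c) / 2, (P - u + (Q - v) + e - c) / 2, by ring, by ring⟩
  have hv : 0 ≤ v := by linarith
  have hw : 0 < w := by linarith
  have hanti₁ : AntitoneOn (fun r ↦ coshSinhSinh P Q (u + v) r / coshSinhSinh R w e r) (Ioi 0) := by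
    refine antitoneOn_coshSinhSinh_div (by linarith) (by linarith) hw he fun r hr ↦ ?_
    rw [mul_add]
    apply coshElasticity_add_sinhElasticity_add_le <;> nlinarith
  have hanti₂ : AntitoneOn (fun r ↦ coshSinhSinh u (P - Q) v r / coshSinhSinh R w e r) (Ioi 0) := by
    refine antitoneOn_coshSinhSinh_div (by linarith) hv hw he fun r hr ↦ ?_
    rw [mul_sub]
    apply coshElasticity_add_sinhElasticity_sub_le <;> nlinarith
  refine (hanti₁.add hanti₂).congr fun r _ ↦ ?_
  have hnum := sinh_mul_sinh_sub_sinh_mul_sinh (r * P) (r * Q) (r * u) (r * v)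
  have hden := sinh_sub_sinh (r * R) (r * w)
  simp only [← mul_add, ← mul_sub] at hnum hden
  simp only [hRw, hnum, hden, ← add_div, coshSinhSinh, mul_assoc]
  rw [mul_div_mul_left _ _ two_ne_zero]

theorem sinh_add_mul_sinh_add (p q e : ℝ) :
    sinh (p + e) * sinh (q + e) = sinh (p + q + e) * sinh e + sinh p * sinh q := by
  simp only [sinh_add, cosh_add]
  linear_combination sinh p * sinh q * cosh_sq e

theorem sinh_mul_sinh_le_of_add_le {a b c e g h : ℝ} (hb : 0 ≤ b) (he : 0 ≤ e)
    (hg : 0 ≤ g) (hh : 0 ≤ h) (hec : e ≤ c) (hbeg : b ≤ e + g) (haeh : a ≤ e + h)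
    (habce : a + b ≤ c + e) : sinh a * sinh b ≤ sinh c * sinh e + sinh g * sinh h := by
  by_cases hsmall : a ≤ e ∧ b ≤ e
  · calc sinh a * sinh b ≤ sinh c * sinh e := by
          have := sinh_le_sinh.2 (hsmall.1.trans hec)
          have := sinh_le_sinh.2 hsmall.2
          have := sinh_nonneg_iff.2 (he.trans hec)
          gcongr
      _ ≤ sinh c * sinh e + sinh g * sinh h := le_add_of_nonneg_right (by positivity)
  · have hprod : sinh (b - e) * sinh (a - e) ≤ sinh g * sinh h := by
      rcases le_total b e with hbe | heb
      · have hea : e < a := not_le.1 fun hae ↦ hsmall ⟨hae, hbe⟩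
        exact (mul_nonpos_of_nonpos_of_nonneg (sinh_nonpos_iff.2 (by linarith))
          (sinh_nonneg_iff.2 (by linarith))).trans (by positivity)
      rcases le_total a e with hae | hea
      · exact (mul_nonpos_of_nonneg_of_nonpos (sinh_nonneg_iff.2 (by linarith))
          (sinh_nonpos_iff.2 (by linarith))).trans (by positivity)
      · exact mul_le_mul (sinh_le_sinh.2 (by linarith)) (sinh_le_sinh.2 (by linarith))
          (sinh_nonneg_iff.2 (by linarith)) (by positivity)
    have hid := sinh_add_mul_sinh_add (b - e) (a - e) e
    rw [sub_add_cancel, sub_add_cancel] at hid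
    calc sinh a * sinh b = sinh (b - e + (a - e) + e) * sinh e + sinh (b - e) * sinh (a - e) := by
          rw [← hid, mul_comm]
      _ ≤ sinh c * sinh e + sinh g * sinh h := by
          have hc : sinh (b - e + (a - e) + e) ≤ sinh c := sinh_le_sinh.2 (by linarith)
          gcongr

/-- The four-point inequality of Ptolemy for the ordered quadruple `x, y, z, w`, with diagonals
`x z` and `y w`, in the geometry of curvature `-(2 * r) ^ 2`: a distance `d` enters through its
model-space chord `sinh (r * d)`. -/
def SinhPtolemy {X : Type*} [PseudoMetricSpace X] (r : ℝ) (x y z w : X) : Prop :=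
  sinh (r * dist x z) * sinh (r * dist y w) ≤
    sinh (r * dist x y) * sinh (r * dist z w) + sinh (r * dist y z) * sinh (r * dist x w)

namespace SinhPtolemy

variable {X : Type*} [PseudoMetricSpace X] {x y z w : X} {r s : ℝ}

theorem rotate (h : SinhPtolemy r x y z w) : SinhPtolemy r y z w x := by
  rw [SinhPtolemy] at h ⊢
  rw [dist_comm y x, dist_comm w x, dist_comm z x]
  linarith

theorem reflect (h : SinhPtolemy r x y z w) : SinhPtolemy r y x w z := by
  rw [SinhPtolemy] at h ⊢
  rw [dist_comm y x, dist_comm w z]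
  linarith

theorem of_add_le (hr : 0 ≤ r) (h : dist x z + dist y w ≤ dist x y + dist z w) :
    SinhPtolemy r x y z w := by
  wlog hle : dist z w ≤ dist x y generalizing x y z w
  · refine (this (x := z) (y := w) (z := x) (w := y) ?_ ?_).rotate.rotate
    · rw [dist_comm z x, dist_comm w y]
      linarith
    · exact (not_le.1 hle).le
  have hyw : dist y w ≤ dist z w + dist y z := by
    linarith [dist_triangle y z w]
  have hxz : dist x z ≤ dist z w + dist x w := by
    linarith [dist_triangle_right x z w]
  refine sinh_mul_sinh_le_of_add_le (by positivity) (by positivity) (by positivity)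
    (by positivity) ?_ ?_ ?_ ?_
  · gcongr
  · rw [← mul_add]
    gcongr
  · rw [← mul_add]
    gcongr
  · rw [← mul_add, ← mul_add]
    gcongr

theorem mono_of_le_diagonal (hr : 0 < r) (hrs : r ≤ s) (hxy : dist x y ≤ dist x z)
    (hzw : dist z w ≤ dist x z) (hyz : dist y z ≤ dist x z) (hxw : dist x w ≤ dist x z)
    (h₁ : dist x y + dist z w < dist x z + dist y w)
    (h₂ : dist y z + dist x w < dist x z + dist y w) (h : SinhPtolemy s x y z w) :
    SinhPtolemy r x y z w := by
  have hyw : 0 < dist y w := by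
    linarith [dist_triangle4 x y w z, dist_comm z w]
  have hxz : 0 < dist x z := by
    linarith [dist_triangle_left y w x]
  have hanti {a b : ℝ} (ha : 0 ≤ a) (hb : 0 ≤ b) (haz : a ≤ dist x z) (hbz : b ≤ dist x z)
      (hab : a + b ≤ dist y w + dist x z) :
      AntitoneOn (fun t ↦ coshSinhSinh 0 a b t / coshSinhSinh 0 (dist y w) (dist x z) t)
        (Ioi 0) := by
    refine antitoneOn_coshSinhSinh_div ha hb hyw hxz fun t ht ↦ ?_
    have hS : sinhElasticity (t * a) + sinhElasticity (t * b) ≤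
        sinhElasticity (t * dist y w) + sinhElasticity (t * dist x z) := by
      refine add_le_add_of_convexOn_of_monotoneOn convexOn_sinhElasticity monotoneOn_sinhElasticity
        (mem_Ici.2 (by positivity)) (mem_Ici.2 (by positivity)) (mem_Ici.2 (by positivity))
        (mem_Ici.2 (by positivity)) (by gcongr) (by gcongr) ?_
      rw [← mul_add, ← mul_add]
      gcongr
    linarith
  have hsum := (hanti dist_nonneg dist_nonneg hxy hzw (by linarith)).add
    (hanti dist_nonneg dist_nonneg hyz hxw (by linarith))
  simp only [← add_div, coshSinhSinh, mul_zero, cosh_zero, one_mul, mul_comm (sinh (_ * dist y w))]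
    at hsum
  have hs : 0 < s := hr.trans_le hrs
  exact le_of_antitoneOn_div hsum hr hs hrs (by positivity) (by positivity) h

theorem mono_of_diagonals_le_side (hr : 0 < r) (hrs : r ≤ s) (hxz : dist x z ≤ dist x y)
    (hyw : dist y w ≤ dist x y) (h₁ : dist x y + dist z w < dist x z + dist y w)
    (h₂ : dist y z + dist x w < dist x z + dist y w) (h : SinhPtolemy s x y z w) :
    SinhPtolemy r x y z w := by
  have hpg : dist y w ≤ dist z w + dist y z := by linarith [dist_triangle y z w]
  have hqh : dist x z ≤ dist z w + dist x w := by linarith [dist_triangle_right x z w]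
  obtain ⟨p, hp⟩ : ∃ p, dist y w = p + dist z w := ⟨_, (sub_add_cancel _ _).symm⟩
  obtain ⟨q, hq⟩ : ∃ q, dist x z = q + dist z w := ⟨_, (sub_add_cancel _ _).symm⟩
  have he : 0 < dist z w := by linarith
  have hc : dist x y < p + q + dist z w := by linarith
  have hden {t : ℝ} (ht : 0 < t) :
      0 < (sinh (t * (p + q + dist z w)) - sinh (t * dist x y)) * sinh (t * dist z w) :=
    mul_pos (sub_pos.2 (sinh_lt_sinh.2 (by gcongr))) (by positivity)
  have hiff (t : ℝ) : SinhPtolemy t x y z w ↔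
      (sinh (t * (p + q + dist z w)) - sinh (t * dist x y)) * sinh (t * dist z w) ≤
        sinh (t * dist y z) * sinh (t * dist x w) - sinh (t * p) * sinh (t * q) := by
    have hid := sinh_add_mul_sinh_add (t * p) (t * q) (t * dist z w)
    rw [← mul_add, ← mul_add, ← mul_add, ← mul_add, ← hp, ← hq] at hid
    rw [SinhPtolemy, mul_comm (sinh (t * dist x z)), hid, sub_mul, sub_le_iff_le_add,
      sub_add_eq_add_sub, le_sub_iff_add_le, add_comm (sinh (t * dist y z) * _)]
  have hanti := antitoneOn_sinh_mul_sinh_sub_div (p := p) (q := q) (g := dist y z) (h := dist x w)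
    (c := dist x y) (by linarith) (by linarith) (by linarith) (by linarith) (by linarith) he hc
    (by linarith) (by linarith)
  have hs : 0 < s := hr.trans_le hrs
  exact (hiff r).2 (le_of_antitoneOn_div hanti hr hs hrs (hden hr) (hden hs) ((hiff s).1 h))

theorem mono_of_le_side (hr : 0 < r) (hrs : r ≤ s) (hzw : dist z w ≤ dist x y)
    (hyz : dist y z ≤ dist x y) (hxw : dist x w ≤ dist x y) (h : SinhPtolemy s x y z w) :
    SinhPtolemy r x y z w := by
  rcases le_or_gt (dist x z + dist y w) (dist x y + dist z w) with h₁ | h₁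
  · exact of_add_le hr.le h₁
  rcases le_or_gt (dist x z + dist y w) (dist y z + dist x w) with h₂ | h₂
  · refine (of_add_le (x := y) (y := z) (z := w) (w := x) hr.le ?_).rotate.rotate.rotate
    rwa [dist_comm z x, dist_comm w x, add_comm]
  rcases le_total (dist x y) (dist x z) with hxz | hxz
  · exact mono_of_le_diagonal hr hrs hxz (hzw.trans hxz) (hyz.trans hxz) (hxw.trans hxz) h₁ h₂ h
  rcases le_total (dist x y) (dist y w) with hyw | hyw
  · refine (mono_of_le_diagonal hr hrs ?_ ?_ ?_ ?_ ?_ ?_ h.reflect).reflect <;>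
      linarith [dist_comm y x, dist_comm w z]
  · exact mono_of_diagonals_le_side hr hrs hxz hyw h₁ h₂ h

theorem mono (hr : 0 < r) (hrs : r ≤ s) (h : SinhPtolemy s x y z w) : SinhPtolemy r x y z w := by
  wlog hzw : dist z w ≤ dist x y generalizing x y z w
  · refine (this h.rotate.rotate ?_).rotate.rotate
    exact (not_le.1 hzw).le
  wlog hxw : dist x w ≤ dist y z generalizing x y z w
  · refine (this h.reflect ?_ ?_).reflect
    · rwa [dist_comm w z, dist_comm y x]
    · exact (not_le.1 hxw).le
  rcases le_total (dist y z) (dist x y) with hyz | hxy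
  · exact mono_of_le_side hr hrs hzw hyz (hxw.trans hyz) h
  · refine (mono_of_le_side hr hrs ?_ ?_ ?_ h.rotate).rotate.rotate.rotate
    · rwa [dist_comm w x]
    · exact hzw.trans hxy
    · rwa [dist_comm y x]

end SinhPtolemy

theorem sinhPtolemy_one_half (z₁ z₂ z₃ z₄ : UpperHalfPlane) : SinhPtolemy (1 / 2) z₁ z₂ z₃ z₄ := by
  have hsinh (z w : UpperHalfPlane) :
      sinh (1 / 2 * dist z w) = dist (z : ℂ) w / (2 * (√z.im * √w.im)) := by
    rw [one_div_mul_eq_div, UpperHalfPlane.sinh_half_dist, sqrt_mul z.im_pos.le]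
  have hsqrt (z : UpperHalfPlane) : 0 < √z.im := sqrt_pos.2 z.im_pos
  have h₁ := hsqrt z₁
  have h₂ := hsqrt z₂
  have h₃ := hsqrt z₃
  have h₄ := hsqrt z₄
  have hptolemy := EuclideanGeometry.mul_dist_le_mul_dist_add_mul_dist (z₁ : ℂ) z₂ z₃ z₄
  simp only [SinhPtolemy, hsinh]
  field_simp
  linarith

/-- The κ-Ptolemy inequality for κ = −r², 0 < r ≤ 1, in the hyperbolic plane
(which is CAT(κ) for every κ ≥ −1). -/
theorem hyperbolic_kappa_ptolemy (r : ℝ) (hr0 : 0 < r) (hr1 : r ≤ 1)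
    (z₁ z₂ z₃ z₄ : UpperHalfPlane) :
    Real.sinh (r * dist z₁ z₃ / 2) * Real.sinh (r * dist z₂ z₄ / 2) ≤
      Real.sinh (r * dist z₁ z₂ / 2) * Real.sinh (r * dist z₃ z₄ / 2) +
        Real.sinh (r * dist z₂ z₃ / 2) * Real.sinh (r * dist z₁ z₄ / 2) := by
  have h : SinhPtolemy (r / 2) z₁ z₂ z₃ z₄ :=
    (sinhPtolemy_one_half z₁ z₂ z₃ z₄).mono (half_pos hr0) (by gcongr)
  simpa only [SinhPtolemy, div_mul_eq_mul_div] using h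
end

section
/- The hyperbolic plane is a Ptolemaic metric space: for any four points z₁, z₂, z₃, z₄ in the hyperbolic plane, writing d_ij for the hyperbolic distance between z_i and z_j, one has d₁₃·d₂₄ ≤ d₁₂·d₃₄ + d₂₃·d₁₄. (This is the κ = 0 Ptolemy inequality, valid because the hyperbolic plane is CAT(0).) -/
/-!
Ptolemy's inequality holds in every CAT(0) space. For a quadrilateral with sides
`a = d₁₂`, `b = d₂₃`, `c = d₃₄`, `d = d₁₄` and diagonal `p = d₁₃`, let `m` divide the geodesic from
`z₁` to `z₃` in the ratio `ad : bc`, which is where the diagonals of a cyclic quadrilateral cross.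
The CAT(0) inequality bounds `d₂ₘ` and `d₄ₘ`, and AM-GM turns the two bounds into
`p * (d₂ₘ + d₄ₘ) ≤ ac + bd`.

The hyperbolic plane is CAT(0): in the hyperboloid model a point on a geodesic is a linear
combination of the endpoints, so distances to it obey a linear relation between hyperbolic cosines.
As `x ↦ cosh √x` is convex, this relation becomes the required inequality between squared distances.
-/

open Real Set UpperHalfPlane

/-- The CAT(0) condition on a metric space, in the form of Bruhat and Tits: the geodesic from `x` to
`z` has points dividing it in every ratio, and distances to them are at most the distances in a
Euclidean comparison triangle. It is encoded without geodesics: taking `y = x` and `y = z` in the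
inequality forces `dist x m = b * dist x z` and `dist z m = a * dist x z`. -/
def IsCAT0 (X : Type*) [MetricSpace X] : Prop :=
  ∀ (x z : X) (a b : ℝ), 0 < a → 0 < b → a + b = 1 →
    ∃ m : X, ∀ y : X, dist y m ^ 2 ≤ a * dist y x ^ 2 + b * dist y z ^ 2 - a * b * dist x z ^ 2

lemma two_mul_mul_le_of_sq_le_mul_sub {u v N p r : ℝ} (hu : 0 < u)
    (h : r ^ 2 ≤ u * (N - v * p ^ 2)) : 2 * (p * r) ≤ u * p ^ 2 + (N - v * p ^ 2) := by
  have hN : 0 ≤ N - v * p ^ 2 := nonneg_of_mul_nonneg_right ((sq_nonneg r).trans h) hu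
  refine two_mul_le_add_of_sq_le_mul (by positivity) hN ?_
  linarith [mul_le_mul_of_nonneg_left h (sq_nonneg p)]

lemma mul_add_le_of_sq_le {a b c d p r s : ℝ} (ha : 0 < a) (hb : 0 < b) (hc : 0 < c) (hd : 0 < d)
    (hr : ((a * d + b * c) * r) ^ 2 ≤ a * b * ((a * d + b * c) * (a * c + b * d) - c * d * p ^ 2))
    (hs : ((a * d + b * c) * s) ^ 2 ≤ c * d * ((a * d + b * c) * (a * c + b * d) - a * b * p ^ 2)) :
    p * (r + s) ≤ a * c + b * d := by
  have hL : 0 < a * d + b * c := by positivity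
  have hpr := two_mul_mul_le_of_sq_le_mul_sub (mul_pos ha hb) hr
  have hps := two_mul_mul_le_of_sq_le_mul_sub (mul_pos hc hd) hs
  refine le_of_mul_le_mul_left ?_ hL
  linarith

theorem IsCAT0.ptolemaic {X : Type*} [MetricSpace X] (hX : IsCAT0 X) (z₁ z₂ z₃ z₄ : X) :
    dist z₁ z₃ * dist z₂ z₄ ≤ dist z₁ z₂ * dist z₃ z₄ + dist z₂ z₃ * dist z₁ z₄ := by
  rcases eq_or_ne z₁ z₂ with rfl | h₁₂
  · simp [mul_comm]
  rcases eq_or_ne z₂ z₃ with rfl | h₂₃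
  · simp
  rcases eq_or_ne z₃ z₄ with rfl | h₃₄
  · simp [mul_comm]
  rcases eq_or_ne z₁ z₄ with rfl | h₁₄
  · simp [dist_comm, mul_comm]
  have ha := dist_pos.2 h₁₂
  have hb := dist_pos.2 h₂₃
  have hc := dist_pos.2 h₃₄
  have hd := dist_pos.2 h₁₄
  obtain ⟨m, hm⟩ := hX z₁ z₃
    (dist z₂ z₃ * dist z₃ z₄ / (dist z₁ z₂ * dist z₁ z₄ + dist z₂ z₃ * dist z₃ z₄))
    (dist z₁ z₂ * dist z₁ z₄ / (dist z₁ z₂ * dist z₁ z₄ + dist z₂ z₃ * dist z₃ z₄))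
    (by positivity) (by positivity) (by field_simp; ring)
  have hr := hm z₂
  have hs := hm z₄
  rw [dist_comm z₂ z₁] at hr
  rw [dist_comm z₄ z₁, dist_comm z₄ z₃] at hs
  calc dist z₁ z₃ * dist z₂ z₄ ≤ dist z₁ z₃ * (dist z₂ m + dist z₄ m) := by
        gcongr
        exact dist_triangle_right z₂ z₄ m
    _ ≤ dist z₁ z₂ * dist z₃ z₄ + dist z₂ z₃ * dist z₁ z₄ := by
        refine mul_add_le_of_sq_le ha hb hc hd ?_ ?_
        · field_simp at hr
          linarith
        · field_simp at hs
          linarith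

lemma convexOn_cosh_sqrt : ConvexOn ℝ (Ici 0) fun x ↦ cosh √x := by
  have hasSum_cosh_sqrt {x : ℝ} (hx : 0 ≤ x) :
      HasSum (fun n : ℕ ↦ x ^ n / (2 * n).factorial) (cosh √x) := by
    simpa only [pow_mul, sq_sqrt hx] using hasSum_cosh √x
  refine ⟨convex_Ici 0, fun x hx y hy a b ha hb hab ↦ ?_⟩
  refine hasSum_le (fun n ↦ ?_) (hasSum_cosh_sqrt (convex_Ici 0 hx hy ha hb hab))
    (((hasSum_cosh_sqrt hx).const_smul a).add ((hasSum_cosh_sqrt hy).const_smul b))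
  rw [← smul_div_assoc, ← smul_div_assoc, ← add_div]
  gcongr
  exact (convexOn_pow n).2 hx hy ha hb hab

lemma mul_sq_add_le_sq_of_cosh_eq {l m p q a : ℝ} (hl : 0 ≤ l) (hm : 0 ≤ m) (hlm : l + m = 1)
    (h : cosh a = l * cosh p + m * cosh q) : l * p ^ 2 + m * q ^ 2 ≤ a ^ 2 := by
  have hconv : cosh √(l * p ^ 2 + m * q ^ 2) ≤ cosh a := by
    simpa only [smul_eq_mul, sqrt_sq_eq_abs, cosh_abs, ← h] using
      convexOn_cosh_sqrt.2 (sq_nonneg p) (sq_nonneg q) hl hm hlm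
  rw [cosh_le_cosh, abs_of_nonneg (sqrt_nonneg _)] at hconv
  simpa only [sq_abs] using (sqrt_le_left (abs_nonneg a)).1 hconv

/-- In a triangle with sides `a` and `b`, `r` is the length of a cevian that cuts the base into `T`,
next to `a`, and `S`, next to `b`. The hypothesis `h` is Stewart's theorem of hyperbolic geometry,
and equality in the conclusion is Stewart's theorem of Euclidean geometry. -/
lemma stewart_le_of_sinh_mul_cosh_eq {r S T a b : ℝ} (hS : 0 ≤ S) (hT : 0 < T)
    (hra : |r - T| ≤ a) (har : a ≤ r + T)
    (h : sinh (S + T) * cosh r = sinh S * cosh a + sinh T * cosh b) :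
    (S + T) * (r ^ 2 + S * T) ≤ S * a ^ 2 + T * b ^ 2 := by
  have ha : 0 ≤ a := (abs_nonneg _).trans hra
  -- The weights `l`, `m` are `(1 ± cos θ) / 2`, where `θ` is the angle between `r` and `T`.
  obtain ⟨l, m, hl, hm, hlm, hcosh_a⟩ : cosh a ∈ segment ℝ (cosh (r - T)) (cosh (r + T)) := by
    refine Icc_subset_segment ⟨?_, ?_⟩
    · rwa [cosh_le_cosh, abs_of_nonneg ha]
    · rwa [cosh_le_cosh, abs_of_nonneg ha, abs_of_nonneg (ha.trans har)]
  obtain rfl : m = 1 - l := by linarith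
  simp only [smul_eq_mul] at hcosh_a
  have hcosh_b : cosh b = l * cosh (r + S) + (1 - l) * cosh (r - S) := by
    refine mul_left_cancel₀ (sinh_pos_iff.2 hT).ne' ?_
    simp only [cosh_add, cosh_sub, sinh_add] at h hcosh_a ⊢
    linear_combination (-1) * h + sinh S * hcosh_a
  have hsq_a := mul_le_mul_of_nonneg_left (mul_sq_add_le_sq_of_cosh_eq hl hm hlm hcosh_a.symm) hS
  have hsq_b := mul_le_mul_of_nonneg_left (mul_sq_add_le_sq_of_cosh_eq hl hm hlm hcosh_b) hT.le
  linarith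

-- The polarization of `A * C - B ^ 2` at the points `(1, re, re² + im²) / im` of the hyperboloid
-- `A * C - B ^ 2 = 1`.
lemma cosh_dist_eq_hyperboloid (z w : ℍ) :
    cosh (dist z w) = ((z.re ^ 2 + z.im ^ 2) / z.im * (1 / w.im)
      - 2 * (z.re / z.im) * (w.re / w.im) + 1 / z.im * ((w.re ^ 2 + w.im ^ 2) / w.im)) / 2 := by
  rw [cosh_dist']
  field_simp
  ring

lemma exists_hyperboloid_coords_eq {A B C : ℝ} (hA : 0 < A) (h : A * C - B ^ 2 = 1) :
    ∃ m : ℍ, 1 / m.im = A ∧ m.re / m.im = B ∧ (m.re ^ 2 + m.im ^ 2) / m.im = C := by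
  refine ⟨⟨⟨B / A, 1 / A⟩, by positivity⟩, ?_⟩
  simp only [← coe_re, ← coe_im]
  refine ⟨by field_simp, by field_simp, ?_⟩
  field_simp
  linarith

lemma exists_cosh_dist_eq_add (x z : ℍ) {α β : ℝ} (hα : 0 < α) (hβ : 0 < β)
    (h : α ^ 2 + β ^ 2 + 2 * α * β * cosh (dist x z) = 1) :
    ∃ m : ℍ, ∀ y : ℍ, cosh (dist y m) = α * cosh (dist y x) + β * cosh (dist y z) := by
  obtain ⟨m, hA, hB, hC⟩ : ∃ m : ℍ, 1 / m.im = α * (1 / x.im) + β * (1 / z.im) ∧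
      m.re / m.im = α * (x.re / x.im) + β * (z.re / z.im) ∧ (m.re ^ 2 + m.im ^ 2) / m.im =
        α * ((x.re ^ 2 + x.im ^ 2) / x.im) + β * ((z.re ^ 2 + z.im ^ 2) / z.im) := by
    refine exists_hyperboloid_coords_eq (by positivity) ?_
    refine Eq.trans ?_ h
    rw [cosh_dist_eq_hyperboloid]
    field_simp
    ring
  refine ⟨m, fun y ↦ ?_⟩
  rw [cosh_dist_eq_hyperboloid y m, hA, hB, hC, cosh_dist_eq_hyperboloid y x,
    cosh_dist_eq_hyperboloid y z]
  ring

lemma sinh_sq_add_sinh_sq_add (s t : ℝ) :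
    sinh s ^ 2 + sinh t ^ 2 + 2 * sinh s * sinh t * cosh (s + t) = sinh (s + t) ^ 2 := by
  rw [cosh_add, sinh_add]
  linear_combination (-sinh t ^ 2) * cosh_sq s - sinh s ^ 2 * cosh_sq t

lemma exists_dist_eq_and_stewart (x z : ℍ) {S T : ℝ} (hS : 0 < S) (hT : 0 < T)
    (h : S + T = dist x z) :
    ∃ m : ℍ, dist x m = T ∧ ∀ y : ℍ,
      sinh (S + T) * cosh (dist y m) = sinh S * cosh (dist y x) + sinh T * cosh (dist y z) := by
  have hsS := sinh_pos_iff.2 hS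
  have hsT := sinh_pos_iff.2 hT
  have hsST := sinh_pos_iff.2 (add_pos hS hT)
  obtain ⟨m, hm⟩ := exists_cosh_dist_eq_add x z (div_pos hsS hsST) (div_pos hsT hsST) <| by
    rw [← h]
    field_simp
    linarith [sinh_sq_add_sinh_sq_add S T]
  have hstewart (y : ℍ) :
      sinh (S + T) * cosh (dist y m) = sinh S * cosh (dist y x) + sinh T * cosh (dist y z) := by
    rw [hm]
    field_simp
  refine ⟨m, cosh_injOn dist_nonneg hT.le (mul_left_cancel₀ hsST.ne' ?_), hstewart⟩
  have hsinh_S : sinh S = sinh (S + T) * cosh T - cosh (S + T) * sinh T := by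
    rw [← sinh_sub, add_sub_cancel_right]
  rw [hstewart, dist_self, cosh_zero, ← h]
  linear_combination hsinh_S

theorem isCAT0_upperHalfPlane : IsCAT0 ℍ := by
  intro x z a b ha hb hab
  rcases eq_or_ne x z with rfl | hxz
  · refine ⟨x, fun y ↦ ?_⟩
    rw [← add_mul, hab, dist_self]
    simp
  have hD := dist_pos.2 hxz
  have hS := mul_pos ha hD
  have hT := mul_pos hb hD
  have hST : a * dist x z + b * dist x z = dist x z := by rw [← add_mul, hab, one_mul]
  obtain ⟨m, hxm, hm⟩ := exists_dist_eq_and_stewart x z hS hT hST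
  refine ⟨m, fun y ↦ ?_⟩
  have hlower : |dist y m - b * dist x z| ≤ dist y x := by
    rw [← hxm]
    exact abs_dist_sub_le y x m
  have hupper : dist y x ≤ dist y m + b * dist x z := by
    rw [← hxm]
    exact dist_triangle_right y x m
  have hstewart := stewart_le_of_sinh_mul_cosh_eq hS.le hT hlower hupper (hm y)
  rw [hST] at hstewart
  refine le_of_mul_le_mul_left ?_ hD
  linarith

/-- The hyperbolic plane is a Ptolemaic metric space (the κ = 0 Ptolemy inequality,
valid since it is CAT(0)). -/
theorem hyperbolic_plane_ptolemaic (z₁ z₂ z₃ z₄ : UpperHalfPlane) :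
    dist z₁ z₃ * dist z₂ z₄ ≤ dist z₁ z₂ * dist z₃ z₄ + dist z₂ z₃ * dist z₁ z₄ :=
  isCAT0_upperHalfPlane.ptolemaic z₁ z₂ z₃ z₄
end

section
/- Let n ≥ 1 and let p₁, …, p_{n+2} be unit vectors in the (n+1)-dimensional Euclidean space ℝ^{n+1} (i.e., n+2 points on the unit sphere Sⁿ). Set d_ij = arccos⟪p_i, p_j⟫, the spherical geodesic distance, and let P be the (n+2)×(n+2) matrix with entries P_{ij} = sin²(d_ij/2). Then (−1)^{n+1}·det P ≥ 0; that is, det P vanishes or has sign (−1)^{n+1}. -/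
open RealInnerProductSpace

/-!
On the unit sphere `sin² (d(x, y) / 2) = ‖x - y‖² / 4`, so up to a positive factor the matrix is a
Euclidean squared distance matrix `D`. Subtracting the `k`-th row and then the `k`-th column from
all the others does not change `det D`, keeps the diagonal entry `D k k = 0`, and replaces the
remaining principal block by `-2` times the Gram matrix of the vectors `p i - p k`. A Hermitian
matrix with a positive semidefinite diagonal block and a complementary negative semidefinite block
of size `r` has determinant zero or of sign `(-1) ^ r`, by the Schur complement formula when the
negative block is invertible and by perturbation in general.
-/

section BlockDeterminant

open Matrix
open scoped ComplexOrder

variable {𝕜 ι m n : Type*} [RCLike 𝕜] [Fintype ι] [DecidableEq ι] [Fintype m] [DecidableEq m]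
  [Fintype n] [DecidableEq n]

theorem neg_one_pow_mul_det_fromBlocks_neg_nonneg_of_posDef {A : Matrix m m 𝕜} {D : Matrix n n 𝕜}
    (hA : A.PosSemidef) (hD : D.PosDef) (B : Matrix m n 𝕜) :
    0 ≤ (-1) ^ Fintype.card n * (fromBlocks A B Bᴴ (-D)).det := by
  have hSchur : 0 ≤ (A + B * D⁻¹ * Bᴴ).det :=
    (hA.add (hD.inv.posSemidef.mul_mul_conjTranspose_same B)).det_nonneg
  let _ : Invertible D := hD.isUnit.invertible
  let _ : Invertible (-D) := invertibleNeg D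
  calc
    0 ≤ D.det * (A + B * D⁻¹ * Bᴴ).det := mul_nonneg hD.det_pos.le hSchur
    _ = (-1) ^ Fintype.card n * (fromBlocks A B Bᴴ (-D)).det := by
      rw [det_fromBlocks₂₂, invOf_neg, invOf_eq_nonsing_inv, Matrix.mul_neg, Matrix.neg_mul,
        sub_neg_eq_add, det_neg, ← mul_assoc, ← mul_assoc, ← mul_pow, neg_one_mul, neg_neg,
        one_pow, one_mul]

theorem neg_one_pow_mul_det_fromBlocks_neg_nonneg {A : Matrix m m 𝕜} {D : Matrix n n 𝕜}
    (hA : A.PosSemidef) (hD : D.PosSemidef) (B : Matrix m n 𝕜) :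
    0 ≤ (-1) ^ Fintype.card n * (fromBlocks A B Bᴴ (-D)).det := by
  let f : ℝ → 𝕜 := fun ε =>
    (-1) ^ Fintype.card n * (fromBlocks A B Bᴴ (-(D + ε • (1 : Matrix n n 𝕜)))).det
  have hf : Continuous f := by fun_prop
  have hf_nonneg : ∀ ε > 0, 0 ≤ f ε := fun ε hε =>
    neg_one_pow_mul_det_fromBlocks_neg_nonneg_of_posDef hA
      (PosDef.posSemidef_add hD (PosDef.one.smul hε)) B
  have hf_lim : Filter.Tendsto f (nhdsWithin 0 (Set.Ioi 0)) (nhds (f 0)) :=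
    hf.continuousAt.mono_left nhdsWithin_le_nhds
  have hf_zero : 0 ≤ f 0 :=
    ge_of_tendsto hf_lim (Filter.eventually_of_mem self_mem_nhdsWithin hf_nonneg)
  simpa only [f, zero_smul, add_zero] using hf_zero

theorem neg_one_pow_mul_det_nonneg_of_toBlock {M : Matrix ι ι 𝕜} (hM : M.IsHermitian)
    (s : ι → Prop) [DecidablePred s] (hpos : (M.toBlock s s).PosSemidef)
    (hneg : (-M.toBlock (fun i => ¬s i) fun i => ¬s i).PosSemidef) :
    0 ≤ (-1) ^ Fintype.card {i // ¬s i} * M.det := by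
  have hoff : M.toBlock (fun i => ¬s i) s = (M.toBlock s fun i => ¬s i)ᴴ :=
    Matrix.ext fun i j => (hM.apply i j).symm
  rw [M.det_toBlock s, hoff, ← neg_neg (M.toBlock (fun i => ¬s i) fun i => ¬s i)]
  exact neg_one_pow_mul_det_fromBlocks_neg_nonneg hpos hneg _

theorem det_sub_mul_row_sub_mul_col {R : Type*} [CommRing R] (M : Matrix ι ι R) (k : ι)
    {c d : ι → R} (hc : c k = 0) (hd : d k = 0) :
    (of fun i j => M i j - c i * M k j - d j * (M i k - c i * M k k)).det = M.det := by
  let rowReduced : Matrix ι ι R := of fun i j => M i j - c i * M k j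
  have hrow : M.det = rowReduced.det :=
    det_eq_of_forall_row_eq_smul_add_const c k hc fun i j => by simp [rowReduced, hc]
  rw [hrow, ← det_transpose rowReduced, ← det_transpose]
  refine (det_eq_of_forall_row_eq_smul_add_const d k hd fun j i => ?_).symm
  simp [rowReduced, hd]

-- `hcond` says that `M` is negative semidefinite on the vectors of coordinate sum zero: its matrix
-- is that of the form `-M` in the spanning vectors `e i - e k`.
theorem neg_one_pow_mul_det_nonneg_of_condNegSemidef {M : Matrix ι ι 𝕜} (hM : M.IsHermitian) {k : ι}
    (hk : 0 ≤ M k k)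
    (hcond : (of fun i j => M i k + M k j - M i j - M k k).PosSemidef) :
    0 ≤ (-1) ^ (Fintype.card ι - 1) * M.det := by
  let c : ι → 𝕜 := fun i => if i = k then 0 else 1
  have hck : c k = 0 := if_pos rfl
  have hc : ∀ i : {i // i ≠ k}, c i = 1 := fun i => if_neg i.2
  let N : Matrix ι ι 𝕜 := of fun i j => M i j - c i * M k j - c j * (M i k - c i * M k k)
  have hN : N.IsHermitian := by
    have hstar : ∀ i, star (c i) = c i := fun i => by simp [c, apply_ite]
    refine IsHermitian.ext fun i j => ?_
    simp only [N, of_apply, star_sub, star_mul', hstar, hM.apply]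
    ring
  have hpos : (N.toBlock (· = k) (· = k)).PosSemidef := by
    have hdiag : N.toBlock (· = k) (· = k) = diagonal fun _ => M k k := by
      ext ⟨i, rfl⟩ ⟨j, rfl⟩
      simp [N, hck]
    exact hdiag ▸ PosSemidef.diagonal fun _ => hk
  have hneg : (-N.toBlock (· ≠ k) (· ≠ k)).PosSemidef := by
    convert hcond.submatrix ((↑) : {i // i ≠ k} → ι) using 1
    ext i j
    simp only [N, Matrix.neg_apply, toBlock_apply, submatrix_apply, of_apply, hc]
    ring
  have hcard : Fintype.card {i // i ≠ k} = Fintype.card ι - 1 := by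
    simp
  rw [← hcard, ← det_sub_mul_row_sub_mul_col M k hck hck]
  exact neg_one_pow_mul_det_nonneg_of_toBlock hN (· = k) hpos hneg

end BlockDeterminant

section DistanceMatrix

variable {ι V P : Type*} [Fintype ι] [DecidableEq ι] [Nonempty ι] [SeminormedAddCommGroup V]
  [InnerProductSpace ℝ V]

theorem dist_sq_add_dist_sq_sub_dist_sq [PseudoMetricSpace P] [NormedAddTorsor V P] (x y z : P) :
    dist x z ^ 2 + dist z y ^ 2 - dist x y ^ 2 = 2 * ⟪x -ᵥ z, y -ᵥ z⟫ := by
  rw [dist_comm z y, dist_eq_norm_vsub V x z, dist_eq_norm_vsub V y z, dist_eq_norm_vsub V x y,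
    ← vsub_sub_vsub_cancel_right x y z, norm_sub_sq_real]
  ring

theorem neg_one_pow_mul_det_dist_sq_nonneg [PseudoMetricSpace P] [NormedAddTorsor V P] (p : ι → P) :
    0 ≤ (-1 : ℝ) ^ (Fintype.card ι - 1) * (Matrix.of fun i j => dist (p i) (p j) ^ 2).det := by
  obtain ⟨k⟩ := ‹Nonempty ι›
  refine neg_one_pow_mul_det_nonneg_of_condNegSemidef (k := k) ?_ (sq_nonneg _) ?_
  · exact Matrix.IsHermitian.ext fun i j => by simp [dist_comm]
  · convert (Matrix.posSemidef_gram ℝ fun i => p i -ᵥ p k).smul (zero_le_two (α := ℝ)) using 1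
    ext i j
    simpa using dist_sq_add_dist_sq_sub_dist_sq (p i) (p j) (p k)

theorem sin_half_arccos_sq {x : ℝ} (hx₁ : -1 ≤ x) (hx₂ : x ≤ 1) :
    Real.sin (Real.arccos x / 2) ^ 2 = (1 - x) / 2 := by
  rw [Real.sin_sq_eq_half_sub, mul_div_cancel₀ _ two_ne_zero, Real.cos_arccos hx₁ hx₂, sub_div]

theorem sin_half_arccos_inner_sq {x y : V} (hx : ‖x‖ = 1) (hy : ‖y‖ = 1) :
    Real.sin (Real.arccos ⟪x, y⟫ / 2) ^ 2 = 4⁻¹ * dist x y ^ 2 := by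
  have hinner : |⟪x, y⟫| ≤ 1 := by simpa [hx, hy] using abs_real_inner_le_norm x y
  rw [sin_half_arccos_sq (abs_le.1 hinner).1 (abs_le.1 hinner).2, dist_eq_norm, norm_sub_sq_real,
    hx, hy]
  ring

theorem spherical_ptolemy_determinant_sign_general (p : ι → V) (hp : ∀ i, ‖p i‖ = 1) :
    0 ≤ (-1 : ℝ) ^ (Fintype.card ι - 1) *
      (Matrix.of fun i j => Real.sin (Real.arccos ⟪p i, p j⟫ / 2) ^ 2).det := by
  have hdist : (Matrix.of fun i j => Real.sin (Real.arccos ⟪p i, p j⟫ / 2) ^ 2) =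
      (4⁻¹ : ℝ) • Matrix.of fun i j => dist (p i) (p j) ^ 2 :=
    Matrix.ext fun i j => sin_half_arccos_inner_sq (hp i) (hp j)
  rw [hdist, Matrix.det_smul, mul_left_comm]
  exact mul_nonneg (by positivity) (neg_one_pow_mul_det_dist_sq_nonneg p)

end DistanceMatrix

/-- Higher-dimensional spherical Ptolemy theorem: for n+2 points on the unit sphere Sⁿ,
the determinant of the matrix `(sin²(d_ij/2))`, with `d_ij` the spherical geodesic
distance `arccos ⟪p_i, p_j⟫`, vanishes or has sign (−1)^(n+1). -/
theorem spherical_ptolemy_determinant_sign (n : ℕ) (hn : 1 ≤ n)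
    (p : Fin (n + 2) → EuclideanSpace ℝ (Fin (n + 1))) (hp : ∀ i, ‖p i‖ = 1) :
    0 ≤ (-1 : ℝ) ^ (n + 1) *
      (Matrix.of fun i j : Fin (n + 2) =>
        Real.sin (Real.arccos ⟪p i, p j⟫ / 2) ^ 2).det := by
  simpa only [Fintype.card_fin, Nat.add_one_sub_one] using
    spherical_ptolemy_determinant_sign_general p hp
end

section
/- Let z₁, z₂, z₃, z₄ be four points in the hyperbolic plane and let d_ij denote the hyperbolic distance between z_i and z_j. Then the determinant of the 4×4 matrix with entries sinh²(d_ij/2) is ≤ 0; that is, it vanishes or has sign (−1)^{n+1} with n = 2. -/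
/-!
In the coordinates `(‖x‖², 1, x)` the squared Euclidean distance is the restriction of a bilinear
form of signature `(1, n + 1)`. Hence the matrix of squared distances of `n + 2` points of an
`n`-dimensional space is `L * J * Lᵀ` with `L` square, and the sign of its determinant is that of
`det J`. In the upper half-plane `sinh² (d(z, w) / 2) = |z - w|² / (4 Im z Im w)`, so the hyperbolic
matrix is the Euclidean one with its rows and columns rescaled by the same positive factors.
-/

open Module
open scoped Matrix

section Euclidean

variable {ι E : Type*} [Fintype ι] [NormedAddCommGroup E] [InnerProductSpace ℝ E]

/-- The coordinates `(‖x‖², 1, x)` of the lift of a point of Euclidean space to the light cone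
of Möbius geometry; `Fin 2` indexes the first two entries. -/
noncomputable def conformalLift (b : OrthonormalBasis ι ℝ E) (x : E) : Fin 2 ⊕ ι → ℝ :=
  Sum.elim ![‖x‖ ^ 2, 1] (b.repr x)

variable [DecidableEq ι]

variable (ι) in
/-- The Gram matrix of the Lorentzian form on the coordinates of `conformalLift`, normalized so
that it takes two lifts to the squared distance of the points. -/
def conformalForm : Matrix (Fin 2 ⊕ ι) (Fin 2 ⊕ ι) ℝ :=
  Matrix.fromBlocks !![0, 1; 1, 0] 0 0 ((-2 : ℝ) • 1)

lemma conformalLift_dotProduct_conformalForm_mulVec (b : OrthonormalBasis ι ℝ E) (x y : E) :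
    conformalLift b x ⬝ᵥ conformalForm ι *ᵥ conformalLift b y = dist x y ^ 2 := by
  have inner_coordinates : b.repr x ⬝ᵥ b.repr y = inner ℝ x y := by
    rw [← b.repr.inner_map_map, EuclideanSpace.inner_eq_star_dotProduct, dotProduct_comm]
    rfl
  have norm_coordinates :
      ![‖x‖ ^ 2, 1] ⬝ᵥ !![0, 1; 1, 0] *ᵥ ![‖y‖ ^ 2, 1] = ‖x‖ ^ 2 + ‖y‖ ^ 2 := by
    simp [Matrix.vecHead, Matrix.vecTail, add_comm]
  simp only [conformalLift, conformalForm, Matrix.fromBlocks_mulVec, Sum.elim_comp_inl,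
    Sum.elim_comp_inr, Matrix.zero_mulVec, add_zero, zero_add, sumElim_dotProduct_sumElim,
    Matrix.smul_mulVec, Matrix.one_mulVec, dotProduct_smul, smul_eq_mul]
  rw [norm_coordinates, inner_coordinates, dist_eq_norm, norm_sub_sq_real]
  ring

variable (ι) in
lemma det_conformalForm :
    (conformalForm ι).det = (-1) ^ (Fintype.card ι + 1) * 2 ^ Fintype.card ι := by
  rw [conformalForm, Matrix.det_fromBlocks_zero₂₁, Matrix.det_fin_two_of, Matrix.det_smul,
    Matrix.det_one, neg_pow]
  ring

theorem det_dist_sq_eq_mul_det_conformalLift_sq (b : OrthonormalBasis ι ℝ E)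
    (p : Fin 2 ⊕ ι → E) :
    (Matrix.of fun i j => dist (p i) (p j) ^ 2).det =
      (-1) ^ (Fintype.card ι + 1) * 2 ^ Fintype.card ι *
        (Matrix.of fun i => conformalLift b (p i)).det ^ 2 := by
  set L := Matrix.of fun i => conformalLift b (p i)
  have factorization :
      (Matrix.of fun i j => dist (p i) (p j) ^ 2) = L * conformalForm ι * Lᵀ := by
    ext i j
    rw [Matrix.mul_mul_apply]
    exact (conformalLift_dotProduct_conformalForm_mulVec b (p i) (p j)).symm
  rw [factorization, Matrix.det_mul, Matrix.det_mul, Matrix.det_transpose, det_conformalForm]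
  ring

end Euclidean

theorem neg_one_pow_mul_det_dist_sq_nonneg_s5 {κ E : Type*} [Fintype κ] [DecidableEq κ]
    [NormedAddCommGroup E] [InnerProductSpace ℝ E] [FiniteDimensional ℝ E]
    (card_eq : Fintype.card κ = finrank ℝ E + 2) (p : κ → E) :
    0 ≤ (-1) ^ (finrank ℝ E + 1) * (Matrix.of fun i j => dist (p i) (p j) ^ 2).det := by
  let e : Fin 2 ⊕ Fin (finrank ℝ E) ≃ κ := Fintype.equivOfCardEq (by simp [card_eq, add_comm])
  have det_eq : (Matrix.of fun i j => dist (p i) (p j) ^ 2).det = _ :=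
    (Matrix.det_submatrix_equiv_self e _).symm.trans
      (det_dist_sq_eq_mul_det_conformalLift_sq (stdOrthonormalBasis ℝ E) (p ∘ e))
  rw [det_eq, Fintype.card_fin, mul_assoc, ← mul_assoc, ← pow_add,
    (Even.add_self _).neg_one_pow, one_mul]
  positivity

lemma det_of_mul_mul_eq_prod_sq_mul_det {κ R : Type*} [Fintype κ] [DecidableEq κ] [CommRing R]
    (v : κ → R) (A : Matrix κ κ R) :
    (Matrix.of fun i j => v i * (v j * A i j)).det = (∏ i, v i) ^ 2 * A.det := by
  rw [sq, mul_assoc, ← Matrix.det_mul_row v A]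
  exact Matrix.det_mul_column v (Matrix.of fun i j => v j * A i j)

section Hyperbolic

open UpperHalfPlane

lemma sinh_half_dist_sq (z w : ℍ) :
    Real.sinh (dist z w / 2) ^ 2 = dist (z : ℂ) w ^ 2 / (4 * (z.im * w.im)) := by
  have im_mul_im_nonneg : 0 ≤ z.im * w.im := (mul_pos z.im_pos w.im_pos).le
  rw [sinh_half_dist, div_pow, mul_pow, Real.sq_sqrt im_mul_im_nonneg]
  norm_num

theorem det_sinh_half_dist_sq {κ : Type*} [Fintype κ] [DecidableEq κ] (z : κ → ℍ) :
    (Matrix.of fun i j => Real.sinh (dist (z i) (z j) / 2) ^ 2).det =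
      (∏ i, (2 * (z i).im)⁻¹) ^ 2 *
        (Matrix.of fun i j => dist (z i : ℂ) (z j) ^ 2).det := by
  rw [← det_of_mul_mul_eq_prod_sq_mul_det]
  congr 1
  ext i j
  simp only [Matrix.of_apply, sinh_half_dist_sq]
  ring

end Hyperbolic

/-- For four points in the hyperbolic plane, the determinant of the 4×4 matrix with
entries sinh²(d_ij/2) is ≤ 0 (it vanishes or has sign (−1)^(n+1) with n = 2). -/
theorem hyperbolic_ptolemy_determinant_sign (z₁ z₂ z₃ z₄ : UpperHalfPlane) :
    (Matrix.of fun i j : Fin 4 =>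
      Real.sinh (dist (![z₁, z₂, z₃, z₄] i) (![z₁, z₂, z₃, z₄] j) / 2) ^ 2).det ≤ 0 := by
  rw [det_sinh_half_dist_sq]
  have euclidean_sign := neg_one_pow_mul_det_dist_sq_nonneg_s5 (E := ℂ)
    (by simp [Complex.finrank_real_complex]) fun i => (![z₁, z₂, z₃, z₄] i : ℂ)
  rw [Complex.finrank_real_complex, Odd.neg_one_pow (by decide), neg_one_mul,
    neg_nonneg] at euclidean_sign
  exact mul_nonpos_of_nonneg_of_nonpos (sq_nonneg _) euclidean_sign
end

section
/- For any four points z₁, z₂, z₃, z₄ in the hyperbolic plane, the determinant of the 4×4 matrix with entries cosh(d_ij), where d_ij is the hyperbolic distance between z_i and z_j, is equal to 0. (This is the hyperbolic Cayley–Menger determinant Δ_κ for m = 4 points in the 2-dimensional model space, which vanishes since m ≥ n + 2.) -/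
/-!
The hyperbolic plane embeds into Minkowski space `ℝ^{1,2}` as one sheet of a hyperboloid, and
the Lorentz product of two points of the sheet is `cosh` of their distance. Matrices with entries
`cosh (dist zᵢ zⱼ)` are therefore Gram matrices of vectors in a space of dimension three, and
factor through it.
-/

open scoped Matrix

theorem det_mul_eq_zero_of_card_lt {m n R : Type*} [Fintype m] [Fintype n] [DecidableEq m]
    [CommRing R] (h : Fintype.card n < Fintype.card m) (A : Matrix m n R) (B : Matrix n m R) :
    (A * B).det = 0 := by
  classical
  have charpoly_eq := Matrix.charpoly_mul_comm_of_le A B h.le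
  have coeff_zero : (A * B).charpoly.coeff 0 = 0 := by
    rw [charpoly_eq, Polynomial.coeff_X_pow_mul', if_neg (by lia)]
  rw [Matrix.det_eq_sign_charpoly_coeff, coeff_zero, mul_zero]

/-- The Gram matrix of the Lorentz form `t t' - x x' - y y'` on Minkowski space `ℝ^{1,2}`. The time
coordinate comes first, with positive sign, so that points of the hyperboloid have square `1`. -/
def lorentzMatrix : Matrix (Fin 3) (Fin 3) ℝ :=
  Matrix.diagonal ![1, -1, -1]

/-- The isometry from the upper half-plane to the hyperboloid model of the hyperbolic plane, in
coordinates for which `lorentzMatrix` is the Lorentz form; it sends `i` to `(1, 0, 0)`. -/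
noncomputable def hyperboloidPoint (z : UpperHalfPlane) : Fin 3 → ℝ :=
  ![(z.re ^ 2 + z.im ^ 2 + 1) / (2 * z.im), z.re / z.im, (z.re ^ 2 + z.im ^ 2 - 1) / (2 * z.im)]

theorem hyperboloidPoint_dotProduct_lorentzMatrix_mulVec (z w : UpperHalfPlane) :
    hyperboloidPoint z ⬝ᵥ lorentzMatrix *ᵥ hyperboloidPoint w = Real.cosh (dist z w) := by
  have hz := z.im_ne_zero
  have hw := w.im_ne_zero
  simp only [UpperHalfPlane.cosh_dist', hyperboloidPoint, lorentzMatrix, dotProduct,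
    Matrix.mulVec_diagonal, Fin.sum_univ_three, Matrix.cons_val]
  field

theorem cosh_dist_matrix_eq_mul {ι : Type*} (z : ι → UpperHalfPlane) :
    (Matrix.of fun i j => Real.cosh (dist (z i) (z j))) =
      Matrix.of (hyperboloidPoint ∘ z) * (lorentzMatrix * (Matrix.of (hyperboloidPoint ∘ z))ᵀ) := by
  ext i j
  exact (hyperboloidPoint_dotProduct_lorentzMatrix_mulVec (z i) (z j)).symm

theorem hyperbolic_cayley_menger_four_points_general {ι : Type*} [Fintype ι] [DecidableEq ι]
    (hι : 3 < Fintype.card ι) (z : ι → UpperHalfPlane) :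
    (Matrix.of fun i j => Real.cosh (dist (z i) (z j))).det = 0 := by
  rw [cosh_dist_matrix_eq_mul]
  exact det_mul_eq_zero_of_card_lt (by simpa using hι) _ _

/-- The hyperbolic Cayley–Menger determinant of four points in the hyperbolic plane
(entries cosh(d_ij)) vanishes, since m = 4 ≥ n + 2 for n = 2. -/
theorem hyperbolic_cayley_menger_four_points (z₁ z₂ z₃ z₄ : UpperHalfPlane) :
    (Matrix.of fun i j : Fin 4 =>
      Real.cosh (dist (![z₁, z₂, z₃, z₄] i) (![z₁, z₂, z₃, z₄] j))).det = 0 :=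
  hyperbolic_cayley_menger_four_points_general (by simp) ![z₁, z₂, z₃, z₄]
end

section
/- (Desnanot–Jacobi identity) Let M be an n×n matrix over a commutative ring with n ≥ 3. Denote by M_{∼i,∼j} the (n−1)×(n−1) submatrix of M obtained by deleting the i-th row and the j-th column, and by M_{∼1,n,∼1,n} the (n−2)×(n−2) submatrix obtained by deleting both the first and last rows and both the first and last columns. Then det(M)·det(M_{∼1,n,∼1,n}) = det(M_{∼1,∼1})·det(M_{∼n,∼n}) − det(M_{∼1,∼n})·det(M_{∼n,∼1}). -/
/-!
Split the index set as `p ⊕ q`. Multiplying `A` by the identity matrix with its first block column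
replaced by that of `adjugate A` gives, since `A * adjugate A = A.det • 1`, a block triangular
matrix with diagonal blocks `A.det • 1` and `A₂₂`. Taking determinants yields Jacobi's
complementary minor formula `det (adjugate A)₁₁ = (det A) ^ (|p| - 1) * det A₂₂`, up to a factor
`det A` on both sides, which can be cancelled for the generic matrix over `ℤ`. The Desnanot–Jacobi
identity is the case `|p| = 2`, with the entries of the adjugate written as signed minors.
-/

section Jacobi

open Matrix

variable {R m p q : Type*} [CommRing R] [Fintype m] [Fintype p] [Fintype q]
  [DecidableEq m] [DecidableEq p] [DecidableEq q]

theorem mul_fromBlocks_adjugate_zero_one (A : Matrix (p ⊕ q) (p ⊕ q) R) :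
    A * fromBlocks A.adjugate.toBlocks₁₁ 0 A.adjugate.toBlocks₂₁ 1 =
      fromBlocks (A.det • 1) A.toBlocks₁₂ 0 A.toBlocks₂₂ := by
  have h := mul_adjugate A
  rw [← fromBlocks_toBlocks A, ← fromBlocks_toBlocks (adjugate _), fromBlocks_multiply,
    ← fromBlocks_one, fromBlocks_smul, fromBlocks_inj, fromBlocks_toBlocks] at h
  obtain ⟨h₁₁, -, h₂₁, -⟩ := h
  conv_lhs => rw [← fromBlocks_toBlocks A]
  rw [fromBlocks_multiply, fromBlocks_toBlocks, h₁₁, h₂₁]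
  simp only [Matrix.mul_zero, Matrix.mul_one, zero_add, smul_zero]

theorem det_mul_det_toBlocks₁₁_adjugate (A : Matrix (p ⊕ q) (p ⊕ q) R) :
    A.det * A.adjugate.toBlocks₁₁.det = A.det ^ Fintype.card p * A.toBlocks₂₂.det := by
  simpa only [det_mul, det_fromBlocks_zero₁₂, det_fromBlocks_zero₂₁, det_smul, det_one, mul_one]
    using congrArg det (mul_fromBlocks_adjugate_zero_one A)

theorem det_toBlocks₁₁_adjugate [Nonempty p] (A : Matrix (p ⊕ q) (p ⊕ q) R) :
    A.adjugate.toBlocks₁₁.det = A.det ^ (Fintype.card p - 1) * A.toBlocks₂₂.det := by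
  let X := mvPolynomialX (p ⊕ q) (p ⊕ q) ℤ
  have generic : X.adjugate.toBlocks₁₁.det = X.det ^ (Fintype.card p - 1) * X.toBlocks₂₂.det := by
    apply mul_left_cancel₀ (det_mvPolynomialX_ne_zero (p ⊕ q) ℤ)
    rw [det_mul_det_toBlocks₁₁_adjugate, ← mul_assoc, mul_pow_sub_one Fintype.card_ne_zero]
  let f := MvPolynomial.aeval (R := ℤ) fun ij : (p ⊕ q) × (p ⊕ q) => A ij.1 ij.2
  have hX : f.mapMatrix X = A := mvPolynomialX_mapMatrix_aeval ℤ A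
  have specialized := congrArg f generic
  rw [map_mul, map_pow, AlgHom.map_det, AlgHom.map_det, AlgHom.map_det] at specialized
  change (f.mapMatrix X.adjugate).toBlocks₁₁.det =
    _ * (f.mapMatrix X).toBlocks₂₂.det at specialized
  rwa [AlgHom.map_adjugate, hX] at specialized

theorem det_adjugate_submatrix_of_bijective_sumElim [Nonempty p] (A : Matrix m m R)
    {r : p → m} {s : q → m} (h : Function.Bijective (Sum.elim r s)) :
    (A.adjugate.submatrix r r).det =
      A.det ^ (Fintype.card p - 1) * (A.submatrix s s).det := by
  let e := Equiv.ofBijective _ h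
  have jacobi := det_toBlocks₁₁_adjugate (A.submatrix e e)
  rwa [adjugate_submatrix_equiv_self, det_submatrix_equiv_self] at jacobi

end Jacobi

theorem bijective_sumElim_succAbove {n : ℕ} (i : Fin (n + 2)) (k : Fin (n + 1)) :
    Function.Bijective
      (Sum.elim ![i, i.succAbove k] (i.succAbove ∘ k.succAbove)) := by
  refine (Fintype.bijective_iff_injective_and_card _).2 ⟨?_, by simp [add_comm]⟩
  refine Function.Injective.sumElim ?_
    (Fin.succAbove_right_injective.comp Fin.succAbove_right_injective) ?_
  · simp [Function.Injective, Fin.forall_fin_two]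
  · simp [Fin.forall_fin_two]

theorem desnanot_jacobi_general {R : Type*} [CommRing R] {n : ℕ}
    (M : Matrix (Fin (n + 2)) (Fin (n + 2)) R) (i : Fin (n + 2)) (k : Fin (n + 1)) :
    M.det * (M.submatrix (i.succAbove ∘ k.succAbove) (i.succAbove ∘ k.succAbove)).det =
      (M.submatrix i.succAbove i.succAbove).det *
          (M.submatrix (i.succAbove k).succAbove (i.succAbove k).succAbove).det -
        (M.submatrix i.succAbove (i.succAbove k).succAbove).det *
          (M.submatrix (i.succAbove k).succAbove i.succAbove).det := by
  have jacobi := det_adjugate_submatrix_of_bijective_sumElim M (bijective_sumElim_succAbove i k)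
  generalize i.succAbove k = j at jacobi ⊢
  have sign_sq : ((-1 : R) ^ (i + j : ℕ)) * (-1) ^ (i + j : ℕ) = 1 := by
    rw [← mul_pow, neg_one_mul, neg_neg, one_pow]
  simp only [Matrix.det_fin_two, Matrix.submatrix_apply, Matrix.cons_val_zero, Matrix.cons_val_one,
    Matrix.adjugate_fin_succ_eq_det_submatrix, Even.neg_one_pow (Even.add_self _), one_mul,
    Fintype.card_fin, Nat.add_one_sub_one, pow_one, add_comm (j : ℕ) i] at jacobi
  linear_combination -jacobi - (M.submatrix i.succAbove j.succAbove).det *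
    (M.submatrix j.succAbove i.succAbove).det * sign_sq

/-- Desnanot–Jacobi identity for an m×m matrix with m = n + 3 ≥ 3 over a commutative
ring: `det M · det M_{∼1,m,∼1,m} = det M_{∼1,∼1} · det M_{∼m,∼m} − det M_{∼1,∼m} · det M_{∼m,∼1}`,
where submatrices are obtained by deleting the indicated rows and columns. -/
theorem desnanot_jacobi {R : Type*} [CommRing R] (n : ℕ)
    (M : Matrix (Fin (n + 3)) (Fin (n + 3)) R) :
    M.det *
        (M.submatrix (fun i : Fin (n + 1) => Fin.castSucc i.succ)
          (fun j : Fin (n + 1) => Fin.castSucc j.succ)).det =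
      (M.submatrix (Fin.succAbove 0) (Fin.succAbove 0)).det *
          (M.submatrix (Fin.succAbove (Fin.last (n + 2)))
            (Fin.succAbove (Fin.last (n + 2)))).det -
        (M.submatrix (Fin.succAbove 0) (Fin.succAbove (Fin.last (n + 2)))).det *
          (M.submatrix (Fin.succAbove (Fin.last (n + 2))) (Fin.succAbove 0)).det := by
  simpa [Function.comp_def] using desnanot_jacobi_general M 0 (Fin.last (n + 1))
end

section
/- Let a₁₂, a₁₃, a₁₄, a₂₃, a₂₄, a₃₄ be real numbers and let M be the symmetric 4×4 real matrix with zero diagonal whose off-diagonal entries are M_{ij} = a_ij² (with a_ij = a_ji). Set u = a₁₃·a₂₄, v = a₁₂·a₃₄, w = a₂₃·a₁₄. Then det M = −(u + v + w)·(−u + v + w)·(u − v + w)·(u + v − w). (Applying this with a_ij = s_κ(d_ij/2) gives the factorization of the determinant γ_κ(p₁, p₂, p₃, p₄) = A·B·C·D used in the proof of the κ-Ptolemy inequality.) -/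
/-!
A permutation contributes to the determinant of a matrix with zero diagonal only if it is a
derangement. On four points these are the three double transpositions, which are even, and the six
4-cycles, which are odd. If the matrix is symmetric, the double transpositions contribute the
squares of the three products of opposite entries, and each pair of mutually inverse 4-cycles
contributes twice the product of two of them. With squared entries these three products are `u ^ 2`,
`v ^ 2`, `w ^ 2`, and the resulting quartic is the negative of Heron's polynomial in `u`, `v`, `w`.
-/

section

variable {R : Type*} [CommRing R]

theorem det_fin_four_of_diag_eq_zero {A : Matrix (Fin 4) (Fin 4) R} (hdiag : A.diag = 0) :
    A.det =
      A 0 1 * A 1 0 * (A 2 3 * A 3 2) + A 0 2 * A 2 0 * (A 1 3 * A 3 1) +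
        A 0 3 * A 3 0 * (A 1 2 * A 2 1) -
      (A 0 1 * A 1 2 * A 2 3 * A 3 0 + A 0 3 * A 3 2 * A 2 1 * A 1 0 +
        A 0 1 * A 1 3 * A 3 2 * A 2 0 + A 0 2 * A 2 3 * A 3 1 * A 1 0 +
        A 0 2 * A 2 1 * A 1 3 * A 3 0 + A 0 3 * A 3 1 * A 1 2 * A 2 0) := by
  have diag_apply (i : Fin 4) : A i i = 0 := congrFun hdiag i
  have succ_eq : (Fin.succ : Fin 3 → Fin 4) = ![1, 2, 3] := by decide
  have succAbove_one : (1 : Fin 4).succAbove = ![0, 2, 3] := by decide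
  have succAbove_two : (2 : Fin 4).succAbove = ![0, 1, 3] := by decide
  have succAbove_three : (3 : Fin 4).succAbove = ![0, 1, 2] := by decide
  have laplace_expansion : A.det =
      -A 0 1 * (A.submatrix ![1, 2, 3] ![0, 2, 3]).det +
        A 0 2 * (A.submatrix ![1, 2, 3] ![0, 1, 3]).det -
        A 0 3 * (A.submatrix ![1, 2, 3] ![0, 1, 2]).det := by
    rw [Matrix.det_succ_row_zero, Fin.sum_univ_four, diag_apply, succ_eq, succAbove_one,
      succAbove_two, succAbove_three]
    simp only [Fin.coe_ofNat_eq_mod]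
    ring
  rw [laplace_expansion]
  simp only [Matrix.det_fin_three, Matrix.submatrix_apply, Matrix.cons_val, diag_apply]
  ring

theorem det_fin_four_of_isSymm_of_diag_eq_zero {A : Matrix (Fin 4) (Fin 4) R}
    (hsymm : A.IsSymm) (hdiag : A.diag = 0) :
    A.det =
      (A 0 1 * A 2 3) ^ 2 + (A 0 2 * A 1 3) ^ 2 + (A 0 3 * A 1 2) ^ 2 -
        2 * ((A 0 1 * A 2 3) * (A 0 2 * A 1 3) + (A 0 2 * A 1 3) * (A 0 3 * A 1 2) +
          (A 0 3 * A 1 2) * (A 0 1 * A 2 3)) := by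
  rw [det_fin_four_of_diag_eq_zero hdiag, hsymm.apply 0 1, hsymm.apply 0 2, hsymm.apply 0 3,
    hsymm.apply 1 2, hsymm.apply 1 3, hsymm.apply 2 3]
  ring

theorem heron_factorization (u v w : R) :
    (u + v + w) * (-u + v + w) * (u - v + w) * (u + v - w) =
      2 * (u ^ 2 * v ^ 2 + v ^ 2 * w ^ 2 + w ^ 2 * u ^ 2) - (u ^ 4 + v ^ 4 + w ^ 4) := by
  ring

theorem ptolemy_determinant_factorization_general (a₁₂ a₁₃ a₁₄ a₂₃ a₂₄ a₃₄ : R) :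
    (!![0, a₁₂ ^ 2, a₁₃ ^ 2, a₁₄ ^ 2;
       a₁₂ ^ 2, 0, a₂₃ ^ 2, a₂₄ ^ 2;
       a₁₃ ^ 2, a₂₃ ^ 2, 0, a₃₄ ^ 2;
       a₁₄ ^ 2, a₂₄ ^ 2, a₃₄ ^ 2, 0] : Matrix (Fin 4) (Fin 4) R).det =
      -((a₁₃ * a₂₄ + a₁₂ * a₃₄ + a₂₃ * a₁₄) *
        (-(a₁₃ * a₂₄) + a₁₂ * a₃₄ + a₂₃ * a₁₄) *
        (a₁₃ * a₂₄ - a₁₂ * a₃₄ + a₂₃ * a₁₄) *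
        (a₁₃ * a₂₄ + a₁₂ * a₃₄ - a₂₃ * a₁₄)) := by
  refine (det_fin_four_of_isSymm_of_diag_eq_zero ?symm ?diag).trans ?factorization
  case symm =>
    ext i j
    fin_cases i <;> fin_cases j <;> rfl
  case diag =>
    ext i
    fin_cases i <;> rfl
  case factorization =>
    rw [heron_factorization]
    calc
      _ = (a₁₂ ^ 2 * a₃₄ ^ 2) ^ 2 + (a₁₃ ^ 2 * a₂₄ ^ 2) ^ 2 + (a₁₄ ^ 2 * a₂₃ ^ 2) ^ 2 -
          2 * (a₁₂ ^ 2 * a₃₄ ^ 2 * (a₁₃ ^ 2 * a₂₄ ^ 2) +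
            a₁₃ ^ 2 * a₂₄ ^ 2 * (a₁₄ ^ 2 * a₂₃ ^ 2) +
            a₁₄ ^ 2 * a₂₃ ^ 2 * (a₁₂ ^ 2 * a₃₄ ^ 2)) := rfl
      _ = _ := by ring

end

/-- The factorization of the 4×4 determinant with zero diagonal and off-diagonal
entries a_ij², used in the proof of the κ-Ptolemy inequality:
det M = −(u+v+w)(−u+v+w)(u−v+w)(u+v−w) with u = a₁₃a₂₄, v = a₁₂a₃₄, w = a₂₃a₁₄. -/
theorem ptolemy_determinant_factorization (a₁₂ a₁₃ a₁₄ a₂₃ a₂₄ a₃₄ : ℝ) :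
    (!![0, a₁₂ ^ 2, a₁₃ ^ 2, a₁₄ ^ 2;
       a₁₂ ^ 2, 0, a₂₃ ^ 2, a₂₄ ^ 2;
       a₁₃ ^ 2, a₂₃ ^ 2, 0, a₃₄ ^ 2;
       a₁₄ ^ 2, a₂₄ ^ 2, a₃₄ ^ 2, 0] : Matrix (Fin 4) (Fin 4) ℝ).det =
      -((a₁₃ * a₂₄ + a₁₂ * a₃₄ + a₂₃ * a₁₄) *
        (-(a₁₃ * a₂₄) + a₁₂ * a₃₄ + a₂₃ * a₁₄) *
        (a₁₃ * a₂₄ - a₁₂ * a₃₄ + a₂₃ * a₁₄) *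
        (a₁₃ * a₂₄ + a₁₂ * a₃₄ - a₂₃ * a₁₄)) :=
  ptolemy_determinant_factorization_general a₁₂ a₁₃ a₁₄ a₂₃ a₂₄ a₃₄
end

section
/- Let X be a metric space and x₁, x₂, x₃, x₄ ∈ X, and write d_ij = dist(x_i, x_j). If for every t > 0 the inequality sinh(t·d₁₃/2)·sinh(t·d₂₄/2) ≤ sinh(t·d₁₂/2)·sinh(t·d₃₄/2) + sinh(t·d₁₄/2)·sinh(t·d₂₃/2) holds, then d₁₃ + d₂₄ ≤ max(d₁₂ + d₃₄, d₁₄ + d₂₃). (That is, a quadruple satisfying the κ-Ptolemy inequality for all κ < 0, with t = √(−κ), satisfies the 4-point condition.) -/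
/-!
As `t → ∞`, `sinh (t a) sinh (t b)` grows like `exp (t (a + b)) / 4` when `a, b > 0`. If `a + b`
exceeded both `c + d` and `e + f`, the product on the left of the κ-Ptolemy inequality would
therefore dominate both products on the right for all large `t`. When `a` or `b` vanishes there is
no such growth, and the conclusion is the triangle inequality.
-/

open Real Filter Asymptotics

theorem isEquivalent_sinh_exp_div_two_atTop : sinh ~[atTop] fun u => exp u / 2 := by
  have exp_neg_isLittleO : (fun u : ℝ => exp (-u)) =o[atTop] exp :=
    isLittleO_exp_comp_exp_comp.mpr (by
      simpa only [sub_neg_eq_add, id_eq] using tendsto_id.atTop_add_atTop tendsto_id)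
  have sinh_sub : sinh - (fun u => exp u / 2) = fun u => -1 / 2 * exp (-u) := by
    funext u
    rw [Pi.sub_apply, sinh_eq]
    ring
  rw [IsEquivalent, sinh_sub]
  simpa only [div_eq_inv_mul] using
    (exp_neg_isLittleO.const_mul_left _).const_mul_right (inv_ne_zero two_ne_zero)

theorem isTheta_sinh_mul_exp_mul {a : ℝ} (ha : 0 < a) :
    (fun t => sinh (t * a)) =Θ[atTop] fun t => exp (t * a) := by
  have sinh_isEquivalent := isEquivalent_sinh_exp_div_two_atTop.comp_tendsto
    (tendsto_id.atTop_mul_const ha)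
  refine sinh_isEquivalent.isTheta.trans ?_
  simpa only [Function.comp_def, id_eq, div_eq_inv_mul] using
    (isTheta_const_mul_left (inv_ne_zero two_ne_zero)).mpr isTheta_rfl

theorem isBigO_sinh_mul_exp_mul {c : ℝ} (hc : 0 ≤ c) :
    (fun t => sinh (t * c)) =O[atTop] fun t => exp (t * c) := by
  rcases hc.eq_or_lt with rfl | hc
  · simpa only [mul_zero, sinh_zero] using isBigO_zero _ _
  · exact (isTheta_sinh_mul_exp_mul hc).isBigO

theorem isLittleO_sinh_mul_sinh {a b c d : ℝ} (ha : 0 < a) (hb : 0 < b) (hc : 0 ≤ c) (hd : 0 ≤ d)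
    (hlt : c + d < a + b) :
    (fun t => sinh (t * c) * sinh (t * d)) =o[atTop] fun t => sinh (t * a) * sinh (t * b) := by
  have exp_isLittleO : (fun t => exp (t * c) * exp (t * d)) =o[atTop]
      fun t => exp (t * a) * exp (t * b) := by
    simp only [← exp_add, ← mul_add, isLittleO_exp_comp_exp_comp, ← mul_sub]
    exact tendsto_id.atTop_mul_const (sub_pos.mpr hlt)
  exact ((isBigO_sinh_mul_exp_mul hc).mul (isBigO_sinh_mul_exp_mul hd)).trans_isLittleO
    (exp_isLittleO.trans_isTheta
      ((isTheta_sinh_mul_exp_mul ha).mul (isTheta_sinh_mul_exp_mul hb)).symm)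

theorem eventually_sinh_mul_sinh_add_lt {a b c d e f : ℝ} (ha : 0 < a) (hb : 0 < b) (hc : 0 ≤ c)
    (hd : 0 ≤ d) (he : 0 ≤ e) (hf : 0 ≤ f) (hcd : c + d < a + b) (hef : e + f < a + b) :
    ∀ᶠ t in atTop, sinh (t * c) * sinh (t * d) + sinh (t * e) * sinh (t * f) <
      sinh (t * a) * sinh (t * b) := by
  have sum_isLittleO :=
    (isLittleO_sinh_mul_sinh ha hb hc hd hcd).add (isLittleO_sinh_mul_sinh ha hb he hf hef)
  filter_upwards [sum_isLittleO.bound one_half_pos, eventually_gt_atTop 0] with t hbound ht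
  have prod_pos : 0 < sinh (t * a) * sinh (t * b) :=
    mul_pos (sinh_pos_iff.mpr (mul_pos ht ha)) (sinh_pos_iff.mpr (mul_pos ht hb))
  rw [norm_of_nonneg prod_pos.le] at hbound
  linarith [le_norm_self (sinh (t * c) * sinh (t * d) + sinh (t * e) * sinh (t * f))]

theorem four_point_condition_of_kappa_ptolemy_general {X : Type*} [PseudoMetricSpace X]
    (x₁ x₂ x₃ x₄ : X)
    (h : ∃ᶠ t : ℝ in atTop,
      sinh (t * dist x₁ x₃ / 2) * sinh (t * dist x₂ x₄ / 2) ≤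
        sinh (t * dist x₁ x₂ / 2) * sinh (t * dist x₃ x₄ / 2) +
          sinh (t * dist x₁ x₄ / 2) * sinh (t * dist x₂ x₃ / 2)) :
    dist x₁ x₃ + dist x₂ x₄ ≤
      max (dist x₁ x₂ + dist x₃ x₄) (dist x₁ x₄ + dist x₂ x₃) := by
  rcases (dist_nonneg (x := x₁) (y := x₃)).eq_or_lt with h₁₃ | h₁₃
  · exact le_max_of_le_left (by linarith [dist_triangle4 x₂ x₁ x₃ x₄, dist_comm x₂ x₁])
  rcases (dist_nonneg (x := x₂) (y := x₄)).eq_or_lt with h₂₄ | h₂₄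
  · exact le_max_of_le_left (by linarith [dist_triangle4 x₁ x₂ x₄ x₃, dist_comm x₄ x₃])
  by_contra! hlt
  obtain ⟨hlt₁, hlt₂⟩ := max_lt_iff.mp hlt
  have eventually_reverse_lt := (tendsto_id.atTop_div_const two_pos).eventually
    (eventually_sinh_mul_sinh_add_lt h₁₃ h₂₄ dist_nonneg dist_nonneg dist_nonneg dist_nonneg
      hlt₁ hlt₂)
  obtain ⟨t, ht_le, ht_lt⟩ := (h.and_eventually eventually_reverse_lt).exists
  simp only [mul_div_right_comm] at ht_le
  exact ht_lt.not_ge ht_le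

/-- If a quadruple in a metric space satisfies the κ-Ptolemy inequality for every
κ < 0 (with t = √(−κ)), then it satisfies the 4-point condition. -/
theorem four_point_condition_of_kappa_ptolemy {X : Type*} [MetricSpace X]
    (x₁ x₂ x₃ x₄ : X)
    (h : ∀ t : ℝ, 0 < t →
      Real.sinh (t * dist x₁ x₃ / 2) * Real.sinh (t * dist x₂ x₄ / 2) ≤
        Real.sinh (t * dist x₁ x₂ / 2) * Real.sinh (t * dist x₃ x₄ / 2) +
          Real.sinh (t * dist x₁ x₄ / 2) * Real.sinh (t * dist x₂ x₃ / 2)) :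
    dist x₁ x₃ + dist x₂ x₄ ≤
      max (dist x₁ x₂ + dist x₃ x₄) (dist x₁ x₄ + dist x₂ x₃) :=
  four_point_condition_of_kappa_ptolemy_general x₁ x₂ x₃ x₄
    ((eventually_gt_atTop 0).mono h).frequently
end

section
/- Let X be a metric space such that every 4-tuple of points x₁, x₂, x₃, x₄ ∈ X satisfies the 4-point condition d₁₃ + d₂₄ ≤ max(d₁₂ + d₃₄, d₁₄ + d₂₃), where d_ij = dist(x_i, x_j). Then for every t > 0 and every 4-tuple of points x₁, x₂, x₃, x₄ ∈ X, the inequality sinh(t·d₁₃/2)·sinh(t·d₂₄/2) ≤ sinh(t·d₁₂/2)·sinh(t·d₃₄/2) + sinh(t·d₁₄/2)·sinh(t·d₂₃/2) holds. (That is, a metric space satisfying the 4-point condition satisfies the κ-Ptolemy inequality for every κ < 0, with t = √(−κ).) -/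
/-! The product-to-sum formula `2 sinh x sinh y = cosh (x + y) - cosh (x - y)` turns the claim, for
`a, b` the diagonals and `c, d` and `e, f` the pairs of opposite sides, into
`cosh (a + b) + (cosh (c - d) + cosh (e - f)) ≤ cosh (c + d) + (cosh (e + f) + cosh (a - b))`.
If `c + d` realizes the maximum in the 4-point condition, the first summands compare by that
condition. The remaining sums compare by the triangle inequality alone, because
`cosh x + cosh y = 2 cosh ((x + y) / 2) cosh ((x - y) / 2)` is increasing in `|x + y|` and in
`|x - y|`. The other case follows by exchanging `x₂` and `x₄`. -/

section Hyperbolic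

open Real

theorem sinh_mul_sinh (x y : ℝ) : sinh x * sinh y = (cosh (x + y) - cosh (x - y)) / 2 := by
  rw [cosh_add, cosh_sub]
  ring

theorem cosh_add_cosh (x y : ℝ) :
    cosh x + cosh y = 2 * cosh ((x + y) / 2) * cosh ((x - y) / 2) := by
  have hx : cosh x = cosh ((x + y) / 2 + (x - y) / 2) := by ring_nf
  have hy : cosh y = cosh ((x + y) / 2 - (x - y) / 2) := by ring_nf
  rw [hx, hy, cosh_add, cosh_sub]
  ring

theorem cosh_add_cosh_le_cosh_add_cosh {x y z w : ℝ} (hadd : |x + y| ≤ |z + w|)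
    (hsub : |x - y| ≤ |z - w|) : cosh x + cosh y ≤ cosh z + cosh w := by
  have cosh_half_le {u v : ℝ} (huv : |u| ≤ |v|) : cosh (u / 2) ≤ cosh (v / 2) := by
    rw [cosh_le_cosh, abs_div, abs_div]
    gcongr
  rw [cosh_add_cosh x y, cosh_add_cosh z w]
  gcongr
  · exact cosh_half_le hadd
  · exact cosh_half_le hsub

theorem sinh_mul_sinh_le_add {a b c d e f : ℝ} (hsum : |a + b| ≤ |c + d|)
    (hadd : |(c - d) + (e - f)| ≤ |(e + f) + (a - b)|)
    (hsub : |(c - d) - (e - f)| ≤ |(e + f) - (a - b)|) :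
    sinh a * sinh b ≤ sinh c * sinh d + sinh e * sinh f := by
  have hcosh : cosh (a + b) ≤ cosh (c + d) := cosh_le_cosh.2 hsum
  have hcosh' : cosh (c - d) + cosh (e - f) ≤ cosh (e + f) + cosh (a - b) :=
    cosh_add_cosh_le_cosh_add_cosh hadd hsub
  simp only [sinh_mul_sinh]
  linarith

end Hyperbolic

section FourPoints

variable {X : Type*} [PseudoMetricSpace X]

theorem abs_dist_sub_dist_add_le (x₁ x₂ x₃ x₄ : X) :
    |(dist x₁ x₂ - dist x₃ x₄) + (dist x₁ x₄ - dist x₂ x₃)| ≤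
      (dist x₁ x₄ + dist x₂ x₃) + (dist x₁ x₃ - dist x₂ x₄) := by
  have h₁₂₃ := dist_triangle_right x₁ x₂ x₃
  have h₂₃₄ := dist_triangle x₂ x₃ x₄
  have h₁₃₄ := dist_triangle_left x₃ x₄ x₁
  have h₁₂₄ := dist_triangle_left x₂ x₄ x₁
  rw [abs_le]
  constructor <;> linarith

theorem sinh_mul_sinh_dist_le_of_add_le {x₁ x₂ x₃ x₄ : X}
    (h : dist x₁ x₃ + dist x₂ x₄ ≤ dist x₁ x₂ + dist x₃ x₄) (s : ℝ) :
    Real.sinh (s * dist x₁ x₃) * Real.sinh (s * dist x₂ x₄) ≤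
      Real.sinh (s * dist x₁ x₂) * Real.sinh (s * dist x₃ x₄) +
        Real.sinh (s * dist x₁ x₄) * Real.sinh (s * dist x₂ x₃) := by
  have hsum : |dist x₁ x₃ + dist x₂ x₄| ≤ |dist x₁ x₂ + dist x₃ x₄| :=
    abs_le_abs_of_nonneg (by positivity) h
  have hadd := (abs_dist_sub_dist_add_le x₁ x₂ x₃ x₄).trans (le_abs_self _)
  have hsub : |(dist x₁ x₂ - dist x₃ x₄) - (dist x₁ x₄ - dist x₂ x₃)| ≤
      |(dist x₁ x₄ + dist x₂ x₃) - (dist x₁ x₃ - dist x₂ x₄)| := by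
    -- Exchanging `x₁ ↔ x₂` and `x₃ ↔ x₄` negates two of the three differences.
    have hswap := (abs_dist_sub_dist_add_le x₂ x₁ x₄ x₃).trans (le_abs_self _)
    rw [dist_comm x₂ x₁, dist_comm x₄ x₃] at hswap
    rwa [sub_eq_add_neg (_ - _) (_ - _), neg_sub, sub_eq_add_neg (_ + _), neg_sub,
      add_comm (dist x₁ x₄)]
  apply sinh_mul_sinh_le_add <;> simp only [← mul_add, ← mul_sub, abs_mul] <;> gcongr

theorem kappa_ptolemy_of_four_point_condition_general {x₁ x₂ x₃ x₄ : X}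
    (h : dist x₁ x₃ + dist x₂ x₄ ≤ max (dist x₁ x₂ + dist x₃ x₄) (dist x₁ x₄ + dist x₂ x₃))
    (t : ℝ) :
    Real.sinh (t * dist x₁ x₃ / 2) * Real.sinh (t * dist x₂ x₄ / 2) ≤
      Real.sinh (t * dist x₁ x₂ / 2) * Real.sinh (t * dist x₃ x₄ / 2) +
        Real.sinh (t * dist x₁ x₄ / 2) * Real.sinh (t * dist x₂ x₃ / 2) := by
  simp only [mul_div_right_comm]
  rcases le_max_iff.1 h with h₁₂ | h₁₄
  · exact sinh_mul_sinh_dist_le_of_add_le h₁₂ (t / 2)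
  · rw [dist_comm x₂ x₄, dist_comm x₂ x₃] at h₁₄
    rw [add_comm, dist_comm x₂ x₄, dist_comm x₂ x₃, dist_comm x₃ x₄]
    exact sinh_mul_sinh_dist_le_of_add_le h₁₄ (t / 2)

end FourPoints

/-- A metric space satisfying the 4-point condition satisfies the κ-Ptolemy
inequality for every κ < 0 (with t = √(−κ)). -/
theorem kappa_ptolemy_of_four_point_condition {X : Type*} [MetricSpace X]
    (h : ∀ x₁ x₂ x₃ x₄ : X,
      dist x₁ x₃ + dist x₂ x₄ ≤
        max (dist x₁ x₂ + dist x₃ x₄) (dist x₁ x₄ + dist x₂ x₃)) :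
    ∀ (t : ℝ), 0 < t → ∀ x₁ x₂ x₃ x₄ : X,
      Real.sinh (t * dist x₁ x₃ / 2) * Real.sinh (t * dist x₂ x₄ / 2) ≤
        Real.sinh (t * dist x₁ x₂ / 2) * Real.sinh (t * dist x₃ x₄ / 2) +
          Real.sinh (t * dist x₁ x₄ / 2) * Real.sinh (t * dist x₂ x₃ / 2) :=
  fun t _ x₁ x₂ x₃ x₄ ↦ kappa_ptolemy_of_four_point_condition_general (h x₁ x₂ x₃ x₄) t
end

section
/- Let X be a metric space. The following are equivalent: (i) every 4-tuple of points x₁, x₂, x₃, x₄ ∈ X satisfies the 4-point condition d₁₃ + d₂₄ ≤ max(d₁₂ + d₃₄, d₁₄ + d₂₃), where d_ij = dist(x_i, x_j); (ii) for every t > 0, every 4-tuple of points x₁, x₂, x₃, x₄ ∈ X satisfies sinh(t·d₁₃/2)·sinh(t·d₂₄/2) ≤ sinh(t·d₁₂/2)·sinh(t·d₃₄/2) + sinh(t·d₁₄/2)·sinh(t·d₂₃/2). (This characterizes tree metric spaces as exactly those satisfying the κ-Ptolemy inequality for all κ < 0, with t = √(−κ).) -/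
/-!
Since `2 sinh x sinh y = cosh (x + y) - cosh (x - y)`, the Ptolemy inequality compares hyperbolic
cosines of the three sums `d₁₃ + d₂₄`, `d₁₂ + d₃₄`, `d₁₄ + d₂₃` and of the corresponding
differences. The 4-point condition, applied to the permutations of a quadruple, says that the two
largest of the three sums agree, so `cosh (t (d₁₃ + d₂₄) / 2)` is at most one of the terms on the
other side. Without these two terms the inequality compares two sums of two hyperbolic cosines, and
follows from the triangle inequalities. Conversely, as `t → ∞` the Ptolemy inequality bounds
`cosh (t (d₁₃ + d₂₄) / 2)` by a fixed multiple of `cosh (t M / 2)`, with `M` the larger of the two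
other sums, and comparing growth rates gives `d₁₃ + d₂₄ ≤ M`.
-/

open Filter Real

section HyperbolicCosine

lemma two_mul_cosh_mul_cosh (x y : ℝ) :
    2 * (cosh x * cosh y) = cosh (x + y) + cosh (x - y) := by
  rw [cosh_add, cosh_sub]
  ring

lemma two_mul_sinh_mul_sinh (x y : ℝ) :
    2 * (sinh x * sinh y) = cosh (x + y) - cosh (x - y) := by
  rw [cosh_add, cosh_sub]
  ring

lemma cosh_mul_le_cosh_mul (t : ℝ) {x y : ℝ} (h : |x| ≤ |y|) : cosh (t * x) ≤ cosh (t * y) := by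
  rw [cosh_le_cosh, abs_mul, abs_mul]
  gcongr

lemma cosh_mul_add_cosh_mul_le (t : ℝ) {x y u v : ℝ} (hadd : |x + y| ≤ |u + v|)
    (hsub : |x - y| ≤ |u - v|) :
    cosh (t * x) + cosh (t * y) ≤ cosh (t * u) + cosh (t * v) := by
  have factor (p q : ℝ) : cosh (t * p) + cosh (t * q) =
      2 * (cosh (t / 2 * (p + q)) * cosh (t / 2 * (p - q))) := by
    rw [two_mul_cosh_mul_cosh]
    ring_nf
  rw [factor, factor]
  gcongr 2 * (?_ * ?_)
  · exact cosh_mul_le_cosh_mul _ hadd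
  · exact cosh_mul_le_cosh_mul _ hsub

lemma cosh_le_exp_abs (x : ℝ) : cosh x ≤ exp |x| := by
  rw [← cosh_abs, cosh_eq]
  have : exp (-|x|) ≤ exp |x| := exp_le_exp.2 (neg_le_self (abs_nonneg x))
  linarith

lemma exp_abs_le_two_mul_cosh (x : ℝ) : exp |x| ≤ 2 * cosh x := by
  rw [cosh_eq]
  linarith [exp_abs_le x]

lemma abs_le_abs_of_frequently_cosh_mul_le {x y C : ℝ}
    (h : ∃ᶠ t in atTop, cosh (t * x) ≤ C * cosh (t * y)) : |x| ≤ |y| := by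
  by_contra! hlt
  have tendsto_exp : Tendsto (fun t : ℝ ↦ exp (t * (|x| - |y|))) atTop atTop :=
    tendsto_exp_atTop.comp (tendsto_id.atTop_mul_const (sub_pos.2 hlt))
  obtain ⟨t, hle, hexp, ht⟩ := (h.and_eventually
    ((tendsto_exp.eventually_gt_atTop (2 * C)).and (eventually_ge_atTop 0))).exists
  have hC : 0 < C := pos_of_mul_pos_left ((cosh_pos _).trans_le hle) (cosh_pos _).le
  refine hexp.not_ge ?_
  calc exp (t * (|x| - |y|)) = exp |t * x| / exp |t * y| := by
        rw [← exp_sub, abs_mul, abs_mul, abs_of_nonneg ht, mul_sub]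
    _ ≤ 2 * cosh (t * x) / exp |t * y| := by gcongr; exact exp_abs_le_two_mul_cosh _
    _ ≤ 2 * (C * exp |t * y|) / exp |t * y| := by
        gcongr
        exact hle.trans (by gcongr; exact cosh_le_exp_abs _)
    _ = 2 * C := by field_simp

end HyperbolicCosine

lemma two_largest_eq_of_le_max {α : Type*} [LinearOrder α] {a b c : α} (ha : a ≤ max b c)
    (hb : b ≤ max a c) (hc : c ≤ max a b) : a = b ∨ a = c ∨ b = c ∧ a ≤ b := by
  grind

section Quadruples

/-- The 4-point condition, required of every quadruple of points of `X`; the metric spaces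
satisfying it are the tree metric spaces. -/
def FourPointCondition (X : Type*) [PseudoMetricSpace X] : Prop :=
  ∀ x₁ x₂ x₃ x₄ : X,
    dist x₁ x₃ + dist x₂ x₄ ≤ max (dist x₁ x₂ + dist x₃ x₄) (dist x₁ x₄ + dist x₂ x₃)

variable {X : Type*} [PseudoMetricSpace X]

/-- The `κ`-Ptolemy inequality for a single quadruple of points, with the curvature `κ < 0` encoded
by `t = √(-κ)`. The pairs `x₁, x₃` and `x₂, x₄` are the diagonals. -/
def KappaPtolemy (t : ℝ) (x₁ x₂ x₃ x₄ : X) : Prop :=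
  sinh (t * dist x₁ x₃ / 2) * sinh (t * dist x₂ x₄ / 2) ≤
    sinh (t * dist x₁ x₂ / 2) * sinh (t * dist x₃ x₄ / 2) +
      sinh (t * dist x₁ x₄ / 2) * sinh (t * dist x₂ x₃ / 2)

lemma kappaPtolemy_swap {t : ℝ} {x₁ x₂ x₃ x₄ : X} :
    KappaPtolemy t x₁ x₄ x₃ x₂ ↔ KappaPtolemy t x₁ x₂ x₃ x₄ := by
  simp only [KappaPtolemy, dist_comm x₄, dist_comm x₃ x₂, add_comm]

lemma kappaPtolemy_iff_cosh {t : ℝ} {x₁ x₂ x₃ x₄ : X} :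
    KappaPtolemy t x₁ x₂ x₃ x₄ ↔
      cosh (t / 2 * (dist x₁ x₃ + dist x₂ x₄)) +
          cosh (t / 2 * (dist x₁ x₂ - dist x₃ x₄)) + cosh (t / 2 * (dist x₁ x₄ - dist x₂ x₃)) ≤
        cosh (t / 2 * (dist x₁ x₂ + dist x₃ x₄)) + cosh (t / 2 * (dist x₁ x₄ + dist x₂ x₃)) +
          cosh (t / 2 * (dist x₁ x₃ - dist x₂ x₄)) := by
  have product (p q : ℝ) : sinh (t * p / 2) * sinh (t * q / 2) =
      (cosh (t / 2 * (p + q)) - cosh (t / 2 * (p - q))) / 2 := by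
    rw [eq_div_iff two_ne_zero, mul_comm, two_mul_sinh_mul_sinh]
    ring_nf
  rw [KappaPtolemy, product, product, product]
  constructor <;> intro h <;> linarith

lemma kappaPtolemy_of_diagonals_eq_sides (t : ℝ) {x₁ x₂ x₃ x₄ : X}
    (h : dist x₁ x₃ + dist x₂ x₄ = dist x₁ x₂ + dist x₃ x₄) : KappaPtolemy t x₁ x₂ x₃ x₄ := by
  have h₁₂₃ := dist_triangle x₁ x₂ x₃
  have h₁₃₂ := dist_triangle_right x₁ x₂ x₃
  have h₁₂₄ := dist_triangle_right x₁ x₂ x₄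
  have h₃₁₄ := dist_triangle_left x₃ x₄ x₁
  have differences := cosh_mul_add_cosh_mul_le (t / 2)
    (x := dist x₁ x₂ - dist x₃ x₄) (y := dist x₁ x₄ - dist x₂ x₃)
    (u := dist x₁ x₄ + dist x₂ x₃) (v := dist x₁ x₃ - dist x₂ x₄)
    (abs_le_abs (by linarith) (by linarith)) (abs_le_abs (by linarith) (by linarith))
  rw [kappaPtolemy_iff_cosh, h]
  linarith

lemma kappaPtolemy_of_sides_eq_sides (t : ℝ) {x₁ x₂ x₃ x₄ : X}
    (h : dist x₁ x₂ + dist x₃ x₄ = dist x₁ x₄ + dist x₂ x₃)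
    (hle : dist x₁ x₃ + dist x₂ x₄ ≤ dist x₁ x₂ + dist x₃ x₄) : KappaPtolemy t x₁ x₂ x₃ x₄ := by
  have h₁₃₂ := dist_triangle_right x₁ x₂ x₃
  have h₁₂₄ := dist_triangle_right x₁ x₂ x₄
  have h₃₁₄ := dist_triangle_left x₃ x₄ x₁
  have h₃₂₄ := dist_triangle_left x₃ x₄ x₂
  have differences := cosh_mul_add_cosh_mul_le (t / 2)
    (x := dist x₁ x₂ - dist x₃ x₄) (y := dist x₁ x₄ - dist x₂ x₃)
    (u := dist x₁ x₃ + dist x₂ x₄) (v := dist x₁ x₃ - dist x₂ x₄)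
    (abs_le_abs (by linarith) (by linarith)) (abs_le_abs (by linarith) (by linarith))
  have diagonals : cosh (t / 2 * (dist x₁ x₃ + dist x₂ x₄)) ≤
      cosh (t / 2 * (dist x₁ x₂ + dist x₃ x₄)) :=
    cosh_mul_le_cosh_mul _ (abs_le_abs_of_nonneg (by positivity) hle)
  rw [kappaPtolemy_iff_cosh, ← h]
  linarith

lemma FourPointCondition.two_largest_sums_eq (hX : FourPointCondition X) (x₁ x₂ x₃ x₄ : X) :
    dist x₁ x₃ + dist x₂ x₄ = dist x₁ x₂ + dist x₃ x₄ ∨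
      dist x₁ x₃ + dist x₂ x₄ = dist x₁ x₄ + dist x₂ x₃ ∨
      dist x₁ x₂ + dist x₃ x₄ = dist x₁ x₄ + dist x₂ x₃ ∧
        dist x₁ x₃ + dist x₂ x₄ ≤ dist x₁ x₂ + dist x₃ x₄ := by
  refine two_largest_eq_of_le_max (hX x₁ x₂ x₃ x₄) ?_ ?_
  · simpa only [dist_comm x₃ x₂] using hX x₁ x₃ x₂ x₄
  · simpa only [dist_comm x₄ x₃, max_comm] using hX x₁ x₂ x₄ x₃

lemma FourPointCondition.kappaPtolemy (hX : FourPointCondition X) (t : ℝ) (x₁ x₂ x₃ x₄ : X) :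
    KappaPtolemy t x₁ x₂ x₃ x₄ := by
  rcases hX.two_largest_sums_eq x₁ x₂ x₃ x₄ with h | h | ⟨h, hle⟩
  · exact kappaPtolemy_of_diagonals_eq_sides t h
  · refine kappaPtolemy_swap.1 (kappaPtolemy_of_diagonals_eq_sides t ?_)
    rwa [dist_comm x₄ x₂, dist_comm x₃ x₂]
  · exact kappaPtolemy_of_sides_eq_sides t h hle

lemma KappaPtolemy.cosh_le {t : ℝ} {x₁ x₂ x₃ x₄ : X} (h : KappaPtolemy t x₁ x₂ x₃ x₄) :
    cosh (t / 2 * (dist x₁ x₃ + dist x₂ x₄)) ≤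
      3 * cosh (t / 2 * max (dist x₁ x₂ + dist x₃ x₄) (dist x₁ x₄ + dist x₂ x₃)) := by
  set M := max (dist x₁ x₂ + dist x₃ x₄) (dist x₁ x₄ + dist x₂ x₃)
  have cosh_le_max {s : ℝ} (hs : |s| ≤ M) : cosh (t / 2 * s) ≤ cosh (t / 2 * M) :=
    cosh_mul_le_cosh_mul _ (hs.trans (le_abs_self M))
  have h₁₂ : cosh (t / 2 * (dist x₁ x₂ + dist x₃ x₄)) ≤ cosh (t / 2 * M) :=
    cosh_le_max ((abs_of_nonneg (by positivity)).trans_le (le_max_left _ _))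
  have h₁₄ : cosh (t / 2 * (dist x₁ x₄ + dist x₂ x₃)) ≤ cosh (t / 2 * M) :=
    cosh_le_max ((abs_of_nonneg (by positivity)).trans_le (le_max_right _ _))
  have h₁₃ : cosh (t / 2 * (dist x₁ x₃ - dist x₂ x₄)) ≤ cosh (t / 2 * M) :=
    cosh_le_max ((dist_dist_dist_le x₁ x₃ x₂ x₄).trans (le_max_left _ _))
  have := kappaPtolemy_iff_cosh.1 h
  have := cosh_pos (t / 2 * (dist x₁ x₂ - dist x₃ x₄))
  have := cosh_pos (t / 2 * (dist x₁ x₄ - dist x₂ x₃))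
  linarith

lemma dist_add_dist_le_max_of_frequently_kappaPtolemy {x₁ x₂ x₃ x₄ : X}
    (h : ∃ᶠ t in atTop, KappaPtolemy t x₁ x₂ x₃ x₄) :
    dist x₁ x₃ + dist x₂ x₄ ≤ max (dist x₁ x₂ + dist x₃ x₄) (dist x₁ x₄ + dist x₂ x₃) := by
  have hcosh : ∃ᶠ s in atTop, cosh (s * (dist x₁ x₃ + dist x₂ x₄)) ≤
      3 * cosh (s * max (dist x₁ x₂ + dist x₃ x₄) (dist x₁ x₄ + dist x₂ x₃)) :=
    (tendsto_id.atTop_div_const (zero_lt_two' ℝ)).frequently (h.mono fun _ ht ↦ ht.cosh_le)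
  refine (le_abs_self _).trans ((abs_le_abs_of_frequently_cosh_mul_le hcosh).trans_eq ?_)
  exact abs_of_nonneg (by positivity)

end Quadruples

theorem four_point_condition_iff_kappa_ptolemy_general (X : Type*) [PseudoMetricSpace X] :
    List.TFAE [
      FourPointCondition X,
      ∀ t : ℝ, 0 < t → ∀ x₁ x₂ x₃ x₄ : X, KappaPtolemy t x₁ x₂ x₃ x₄,
      ∀ x₁ x₂ x₃ x₄ : X, ∃ᶠ t in atTop, KappaPtolemy t x₁ x₂ x₃ x₄] := by
  tfae_have 1 → 2 := fun hX t _ ↦ hX.kappaPtolemy t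
  tfae_have 2 → 3 := fun h x₁ x₂ x₃ x₄ ↦
    ((eventually_gt_atTop 0).mono fun t ht ↦ h t ht x₁ x₂ x₃ x₄).frequently
  tfae_have 3 → 1 := fun h x₁ x₂ x₃ x₄ ↦
    dist_add_dist_le_max_of_frequently_kappaPtolemy (h x₁ x₂ x₃ x₄)
  tfae_finish

/-- Characterization of the 4-point condition (tree metric spaces) as validity of
the κ-Ptolemy inequality for every κ < 0 (with t = √(−κ)). -/
theorem four_point_condition_iff_kappa_ptolemy {X : Type*} [MetricSpace X] :
    (∀ x₁ x₂ x₃ x₄ : X,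
      dist x₁ x₃ + dist x₂ x₄ ≤
        max (dist x₁ x₂ + dist x₃ x₄) (dist x₁ x₄ + dist x₂ x₃)) ↔
    (∀ (t : ℝ), 0 < t → ∀ x₁ x₂ x₃ x₄ : X,
      Real.sinh (t * dist x₁ x₃ / 2) * Real.sinh (t * dist x₂ x₄ / 2) ≤
        Real.sinh (t * dist x₁ x₂ / 2) * Real.sinh (t * dist x₃ x₄ / 2) +
          Real.sinh (t * dist x₁ x₄ / 2) * Real.sinh (t * dist x₂ x₃ / 2)) :=
  (four_point_condition_iff_kappa_ptolemy_general X).out 0 1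
end

section
/- Let X be a metric space such that every 4-tuple of points x₁, x₂, x₃, x₄ ∈ X satisfies the 4-point condition d₁₃ + d₂₄ ≤ max(d₁₂ + d₃₄, d₁₄ + d₂₃), where d_ij = dist(x_i, x_j). Then for every κ > 0 and every 4-tuple of points x₁, x₂, x₃, x₄ ∈ X with d₁₂ + d₂₃ + d₃₄ + d₄₁ < 2π/√κ, the inequality sin(√κ·d₁₃/2)·sin(√κ·d₂₄/2) ≤ sin(√κ·d₁₂/2)·sin(√κ·d₃₄/2) + sin(√κ·d₂₃/2)·sin(√κ·d₁₄/2) holds. (That is, a metric space satisfying the 4-point condition satisfies the κ-Ptolemy inequality for every κ > 0 on quadruples of perimeter less than 2·D_κ, where D_κ = π/√κ.) -/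
/-!
Put `p, q` for the half-diagonals, `a, c` and `b, d` for the two pairs of opposite half-sides of a
quadrilateral, scaled by `√κ`. The product formulas give
`sin p * sin q - sin a * sin c = sin u * sin v + (cos (a + c) - cos (p + q)) / 2` with
`u = (p - q + (a - c)) / 2` and `v = (a - c - (p - q)) / 2`. The triangle inequality yields
`|u| ≤ d` and `|v| ≤ b`, and the perimeter bound gives `b, d ≤ π / 2`, so
`sin u * sin v ≤ sin d * sin b`. If the pair `a, c` realises the maximum in the 4-point condition,
then `p + q ≤ a + c ≤ π` and the cosine term is nonpositive; the other case follows by exchanging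
the second and fourth points.
-/

section

open Real

theorem abs_sin_le_sin_of_abs_le {x y : ℝ} (hxy : |x| ≤ y) (hy : y ≤ π / 2) :
    |sin x| ≤ sin y := by
  rw [abs_sin_eq_sin_abs_of_abs_le_pi (by linarith [pi_pos])]
  exact sin_le_sin_of_le_of_le_pi_div_two (by linarith [abs_nonneg x, pi_pos]) hy hxy

theorem sin_mul_sin_le_of_abs_le {x y b d : ℝ} (hx : |x| ≤ d) (hy : |y| ≤ b)
    (hd : d ≤ π / 2) (hb : b ≤ π / 2) : sin x * sin y ≤ sin d * sin b := by
  have hsx := abs_sin_le_sin_of_abs_le hx hd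
  calc sin x * sin y ≤ |sin x| * |sin y| := (le_abs_self _).trans_eq (abs_mul _ _)
    _ ≤ sin d * sin b :=
      mul_le_mul hsx (abs_sin_le_sin_of_abs_le hy hb) (abs_nonneg _) ((abs_nonneg _).trans hsx)

theorem sin_mul_sin_sub_sin_mul_sin (p q a c : ℝ) :
    sin p * sin q - sin a * sin c =
      sin ((p - q + (a - c)) / 2) * sin ((a - c - (p - q)) / 2) +
        (cos (a + c) - cos (p + q)) / 2 := by
  have hsub := cos_sub_cos (p - q) (a - c)
  rw [← neg_sub (a - c), neg_div, sin_neg] at hsub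
  linarith [two_mul_sin_mul_sin p q, two_mul_sin_mul_sin a c]

theorem sin_ptolemy_of_add_le_add {a b c d p q : ℝ}
    (hpc : |p - c| ≤ d) (haq : |a - q| ≤ d) (hpa : |p - a| ≤ b) (hqc : |q - c| ≤ b)
    (hb : b ≤ π / 2) (hd : d ≤ π / 2) (hac : a + c ≤ π) (hpq : 0 ≤ p + q)
    (h : p + q ≤ a + c) :
    sin p * sin q ≤ sin a * sin c + sin b * sin d := by
  have hu : |(p - q + (a - c)) / 2| ≤ d := by
    rw [abs_le] at *
    constructor <;> linarith
  have hv : |(a - c - (p - q)) / 2| ≤ b := by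
    rw [abs_le] at *
    constructor <;> linarith
  have hcos : cos (a + c) ≤ cos (p + q) := cos_le_cos_of_nonneg_of_le_pi hpq hac h
  linarith [sin_mul_sin_sub_sin_mul_sin p q a c, sin_mul_sin_le_of_abs_le hu hv hd hb]

variable {X : Type*} [PseudoMetricSpace X]

theorem two_mul_dist_le_perimeter (x₁ x₂ x₃ x₄ : X) :
    2 * dist x₁ x₄ ≤ dist x₁ x₂ + dist x₂ x₃ + dist x₃ x₄ + dist x₄ x₁ := by
  linarith [dist_triangle4 x₁ x₂ x₃ x₄, dist_comm x₁ x₄]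

variable {x₁ x₂ x₃ x₄ : X}

theorem sin_dist_ptolemy_of_dist_add_dist_le {t : ℝ} (ht : 0 ≤ t)
    (hper : t * (dist x₁ x₂ + dist x₂ x₃ + dist x₃ x₄ + dist x₄ x₁) ≤ π)
    (h : dist x₁ x₃ + dist x₂ x₄ ≤ dist x₁ x₂ + dist x₃ x₄) :
    sin (t * dist x₁ x₃) * sin (t * dist x₂ x₄) ≤
      sin (t * dist x₁ x₂) * sin (t * dist x₃ x₄) +
        sin (t * dist x₂ x₃) * sin (t * dist x₁ x₄) := by
  have scaled_abs_dist_sub_le (x y z : X) : |t * dist x z - t * dist y z| ≤ t * dist x y := by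
    rw [← mul_sub, abs_mul, abs_of_nonneg ht]
    exact mul_le_mul_of_nonneg_left (abs_dist_sub_le x y z) ht
  have hb_nonneg : 0 ≤ t * dist x₂ x₃ := by positivity
  have hd_nonneg : 0 ≤ t * dist x₄ x₁ := by positivity
  have hb : t * dist x₃ x₂ ≤ π / 2 := by
    linarith [mul_le_mul_of_nonneg_left (two_mul_dist_le_perimeter x₃ x₄ x₁ x₂) ht]
  have hd : t * dist x₁ x₄ ≤ π / 2 := by
    linarith [mul_le_mul_of_nonneg_left (two_mul_dist_le_perimeter x₁ x₂ x₃ x₄) ht]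
  have hac : t * dist x₁ x₂ + t * dist x₃ x₄ ≤ π := by linarith
  have hpq : 0 ≤ t * dist x₁ x₃ + t * dist x₂ x₄ := by positivity
  have hpq_le_ac : t * dist x₁ x₃ + t * dist x₂ x₄ ≤ t * dist x₁ x₂ + t * dist x₃ x₄ := by
    simpa only [mul_add] using mul_le_mul_of_nonneg_left h ht
  have hpc := scaled_abs_dist_sub_le x₁ x₄ x₃
  have haq := scaled_abs_dist_sub_le x₁ x₄ x₂
  have hpa := scaled_abs_dist_sub_le x₃ x₂ x₁
  have hqc := scaled_abs_dist_sub_le x₂ x₃ x₄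
  rw [dist_comm x₄ x₃] at hpc
  rw [dist_comm x₄ x₂] at haq
  rw [dist_comm x₃ x₁, dist_comm x₂ x₁, dist_comm x₃ x₂] at hpa
  rw [dist_comm x₃ x₂] at hb
  exact sin_ptolemy_of_add_le_add hpc haq hpa hqc hb hd hac hpq hpq_le_ac

theorem spherical_kappa_ptolemy_of_four_point_condition_general
    (h : dist x₁ x₃ + dist x₂ x₄ ≤
      max (dist x₁ x₂ + dist x₃ x₄) (dist x₁ x₄ + dist x₂ x₃))
    {κ : ℝ} (hκ : 0 < κ)
    (hper : dist x₁ x₂ + dist x₂ x₃ + dist x₃ x₄ + dist x₄ x₁ ≤ 2 * π / √κ) :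
    sin (√κ * dist x₁ x₃ / 2) * sin (√κ * dist x₂ x₄ / 2) ≤
      sin (√κ * dist x₁ x₂ / 2) * sin (√κ * dist x₃ x₄ / 2) +
        sin (√κ * dist x₂ x₃ / 2) * sin (√κ * dist x₁ x₄ / 2) := by
  have ht : 0 ≤ √κ / 2 := by positivity
  have hper' : √κ / 2 * (dist x₁ x₂ + dist x₂ x₃ + dist x₃ x₄ + dist x₄ x₁) ≤ π := by
    rw [le_div_iff₀ (sqrt_pos.mpr hκ)] at hper
    linarith
  simp only [← div_mul_eq_mul_div]
  rcases le_max_iff.mp h with h | h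
  · exact sin_dist_ptolemy_of_dist_add_dist_le ht hper' h
  · have hswap := sin_dist_ptolemy_of_dist_add_dist_le
      (x₁ := x₁) (x₂ := x₄) (x₃ := x₃) (x₄ := x₂) ht
      (by convert hper' using 2; simp only [dist_comm]; ring) (by simpa only [dist_comm] using h)
    simpa only [dist_comm, mul_comm, add_comm] using hswap

end

/-- A metric space satisfying the 4-point condition satisfies the κ-Ptolemy
inequality for every κ > 0 on quadruples of perimeter less than 2·D_κ = 2π/√κ. -/
theorem spherical_kappa_ptolemy_of_four_point_condition {X : Type*} [MetricSpace X]
    (h : ∀ x₁ x₂ x₃ x₄ : X,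
      dist x₁ x₃ + dist x₂ x₄ ≤
        max (dist x₁ x₂ + dist x₃ x₄) (dist x₁ x₄ + dist x₂ x₃)) :
    ∀ (κ : ℝ), 0 < κ → ∀ x₁ x₂ x₃ x₄ : X,
      dist x₁ x₂ + dist x₂ x₃ + dist x₃ x₄ + dist x₄ x₁ < 2 * Real.pi / Real.sqrt κ →
      Real.sin (Real.sqrt κ * dist x₁ x₃ / 2) * Real.sin (Real.sqrt κ * dist x₂ x₄ / 2) ≤
        Real.sin (Real.sqrt κ * dist x₁ x₂ / 2) * Real.sin (Real.sqrt κ * dist x₃ x₄ / 2) +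
          Real.sin (Real.sqrt κ * dist x₂ x₃ / 2) * Real.sin (Real.sqrt κ * dist x₁ x₄ / 2) := by
  intro κ hκ x₁ x₂ x₃ x₄ hper
  exact spherical_kappa_ptolemy_of_four_point_condition_general (h x₁ x₂ x₃ x₄) hκ hper.le
end
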